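/- The m^n·n! elements L_1^{e_1} L_2^{e_2} ⋯ L_n^{e_n} a_w, where 0 ≤ e_i < m for each i and w ranges over the symmetric group S_n, form a k-basis of the cyclotomic Hecke algebra H_n(v_1,…,v_m;q). -/

import Mathlib

noncomputable section
open scoped Classical
open scoped Fin.NatCast

namespace Cyclo

/-- The defining relations of the cyclotomic Hecke algebra of type `G(m,1,n)`.
Generator `i : Fin n` corresponds to `a_{i+1}` of the paper. -/
inductive Rel (k : Type) [Field k] (m n : ℕ) (v : Fin m → k) (q : k) :
    FreeAlgebra k (Fin n) → FreeAlgebra k (Fin n) → Prop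
  | cyclo (i : Fin n) (hi : i.1 = 0) :
      Rel k m n v q
        ((List.ofFn fun j : Fin m =>
          (FreeAlgebra.ι k i - algebraMap k (FreeAlgebra k (Fin n)) (v j))).prod) 0
  | quad (i : Fin n) (hi : 1 ≤ i.1) :
      Rel k m n v q
        ((FreeAlgebra.ι k i - algebraMap k (FreeAlgebra k (Fin n)) q) * (FreeAlgebra.ι k i + 1)) 0
  | braid0 (i j : Fin n) (hi : i.1 = 0) (hj : j.1 = 1) :
      Rel k m n v q
        (FreeAlgebra.ι k i * FreeAlgebra.ι k j * FreeAlgebra.ι k i * FreeAlgebra.ι k j)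
        (FreeAlgebra.ι k j * FreeAlgebra.ι k i * FreeAlgebra.ι k j * FreeAlgebra.ι k i)
  | comm (i j : Fin n) (h : i.1 + 2 ≤ j.1) :
      Rel k m n v q (FreeAlgebra.ι k i * FreeAlgebra.ι k j)
        (FreeAlgebra.ι k j * FreeAlgebra.ι k i)
  | braid (i j : Fin n) (hi : 1 ≤ i.1) (hj : j.1 = i.1 + 1) :
      Rel k m n v q
        (FreeAlgebra.ι k j * FreeAlgebra.ι k i * FreeAlgebra.ι k j)
        (FreeAlgebra.ι k i * FreeAlgebra.ι k j * FreeAlgebra.ι k i)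

/-- The cyclotomic Hecke algebra `H_n(v_1,…,v_m;q)` of type `G(m,1,n)`. -/
def CH (k : Type) [Field k] (m n : ℕ) (v : Fin m → k) (q : k) : Type :=
  RingQuot (Rel k m n v q)

instance (k : Type) [Field k] (m n : ℕ) (v : Fin m → k) (q : k) : Ring (CH k m n v q) :=
  inferInstanceAs (Ring (RingQuot (Rel k m n v q)))

instance (k : Type) [Field k] (m n : ℕ) (v : Fin m → k) (q : k) : Algebra k (CH k m n v q) :=
  inferInstanceAs (Algebra k (RingQuot (Rel k m n v q)))

variable (k : Type) [Field k] (m n : ℕ) (v : Fin m → k) (q : k)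

/-- `gen k m n v q t` is the generator `a_{t+1}` (so `gen 0 = a_1`, …, `gen (n-1) = a_n`). -/
def gen [NeZero n] (t : ℕ) : CH k m n v q :=
  RingQuot.mkAlgHom k (Rel k m n v q) (FreeAlgebra.ι k ((t : Fin n)))

/-- `murphyAux k m n v q t` is the Murphy element `L_{t+1}`. -/
def murphyAux [NeZero n] : ℕ → CH k m n v q
  | 0 => gen k m n v q 0
  | t + 1 => q⁻¹ • (gen k m n v q (t + 1) * murphyAux t * gen k m n v q (t + 1))

/-- The Murphy element `L_{i+1}`, for `i : Fin n`. -/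
def murphy [NeZero n] (i : Fin n) : CH k m n v q := murphyAux k m n v q i.1

/-- The product of adjacent transpositions encoded by a list of `0`-based indices:
`t` encodes the transposition `(t, t+1)` (in `0`-based labels), i.e. `s_{t+1}` of the paper. -/
def swapProd [NeZero n] (l : List ℕ) : Equiv.Perm (Fin n) :=
  (l.map fun t => Equiv.swap ((t : Fin n)) (((t + 1 : ℕ) : Fin n))).prod

/-- The corresponding product of generators of the Hecke algebra: the index `t`
(encoding `s_{t+1}`) contributes the generator `a_{t+2} = gen (t+1)`. -/
def genProd [NeZero n] (l : List ℕ) : CH k m n v q :=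
  (l.map fun t => gen k m n v q (t + 1)).prod

/-- `l` is a reduced word for the permutation `w`. -/
def IsReducedWord [NeZero n] (l : List ℕ) (w : Equiv.Perm (Fin n)) : Prop :=
  (∀ t ∈ l, t + 1 < n) ∧ swapProd n l = w ∧
    ∀ l' : List ℕ, (∀ t ∈ l', t + 1 < n) → swapProd n l' = w → l.length ≤ l'.length

/-- `aw` assigns to each permutation `w` the element `a_w` computed from a(ny) reduced word. -/
def IsAW [NeZero n] (aw : Equiv.Perm (Fin n) → CH k m n v q) : Prop :=
  ∀ (w : Equiv.Perm (Fin n)) (l : List ℕ), IsReducedWord n l w → aw w = genProd k m n v q l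



/-- An `m`-multipartition of `n`:  `part c` is the partition `λ^{(c+1)}`
(so `c = m-1` corresponds to the component `λ^{(m)}` of the paper), given by its
(weakly decreasing) list of row lengths `part c 0, part c 1, …`. -/
structure Multipartition (m n : ℕ) where
  part : Fin m → ℕ → ℕ
  mono : ∀ c i, part c (i + 1) ≤ part c i
  bound : ∀ c i, n ≤ i → part c i = 0
  total : (∑ c : Fin m, ∑ i ∈ Finset.range n, part c i) = n

namespace Multipartition

variable {m n : ℕ}

/-- The size `|λ^{(c+1)}|` of a component. -/
def compSize (Λ : Multipartition m n) (c : Fin m) : ℕ :=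
  ∑ i ∈ Finset.range n, Λ.part c i

/-- `|λ^{(1)}| + ⋯ + |λ^{(kk)}|`. -/
def compSizeUpto (Λ : Multipartition m n) (kk : ℕ) : ℕ :=
  ∑ c ∈ Finset.range kk, (if h : c < m then Λ.compSize ⟨c, h⟩ else 0)

/-- The statistic `Σ_{j>k}|λ^{(j)}| + Σ_{j=1}^{l} λ^{(k)}_j` of the dominance order,
where the component `k` (`1`-based) is `c.1 + 1`. -/
def domStat (Λ : Multipartition m n) (c : Fin m) (l : ℕ) : ℕ :=
  (∑ c' ∈ Finset.univ.filter (fun c' : Fin m => c.1 < c'.1), Λ.compSize c') +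
    ∑ j ∈ Finset.range l, Λ.part c j

/-- The dominance order `Λ ⊵ M`. -/
def Dominates (Λ M : Multipartition m n) : Prop :=
  ∀ (c : Fin m) (l : ℕ), M.domStat c l ≤ Λ.domStat c l

/-- Strict dominance `Λ ▷ M`. -/
def StrictDom (Λ M : Multipartition m n) : Prop :=
  Λ.Dominates M ∧ Λ ≠ M

/-- The (0-based) entry of the canonical tableau `t^Λ` in the box in row `i`, column `j`
of component `c`: the boxes are filled row by row, starting with the rows of `λ^{(m)}`,
then those of `λ^{(m-1)}`, and so on. -/
def canonEntry (Λ : Multipartition m n) (c : Fin m) (i j : ℕ) : ℕ :=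
  (∑ c' ∈ Finset.univ.filter (fun c' : Fin m => c.1 < c'.1), Λ.compSize c') +
    (∑ i' ∈ Finset.range i, Λ.part c i') + j

end Multipartition

/-- A standard tableau of shape `Λ`, with (0-based) entries `0, …, n-1`:
`entry c i j` is the entry in the box in row `i`, column `j` of component `c`
(and is normalised to `0` outside the boxes of `Λ`). -/
structure StdTableau {m n : ℕ} (Λ : Multipartition m n) where
  entry : Fin m → ℕ → ℕ → ℕ
  lt_n : ∀ c i j, j < Λ.part c i → entry c i j < n
  inj : ∀ c i j c' i' j', j < Λ.part c i → j' < Λ.part c' i' →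
    entry c i j = entry c' i' j' → (c, i, j) = (c', i', j')
  surj : ∀ x, x < n → ∃ c i j, j < Λ.part c i ∧ entry c i j = x
  row : ∀ c i j, j + 1 < Λ.part c i → entry c i j < entry c i (j + 1)
  col : ∀ c i j, j < Λ.part c (i + 1) → entry c i j < entry c (i + 1) j
  outside : ∀ c i j, ¬ j < Λ.part c i → entry c i j = 0

variable (k : Type) [Field k] (m n : ℕ)

/-- `d` assigns to each standard tableau `T` of each shape `Λ` the permutation `d(T)`
sending, box by box, the entry of the canonical tableau `t^Λ` to the entry of `T`. -/
def IsD [NeZero n] (d : ∀ Λ : Multipartition m n, StdTableau Λ → Equiv.Perm (Fin n)) : Prop :=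
  ∀ (Λ : Multipartition m n) (T : StdTableau Λ) (c : Fin m) (i j : ℕ), j < Λ.part c i →
    d Λ T ((Λ.canonEntry c i j : ℕ) : Fin n) = ((T.entry c i j : ℕ) : Fin n)

/-- Membership in the row stabiliser `S_Λ` of the canonical tableau `t^Λ`. -/
def InRowStab [NeZero n] (Λ : Multipartition m n) (w : Equiv.Perm (Fin n)) : Prop :=
  ∀ (c : Fin m) (i j : ℕ), j < Λ.part c i →
    ∃ j', j' < Λ.part c i ∧
      w ((Λ.canonEntry c i j : ℕ) : Fin n) = ((Λ.canonEntry c i j' : ℕ) : Fin n)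


variable (k : Type) [Field k] (m n : ℕ) (v : Fin m → k) (q : k)

open Multipartition

/-- The element `x_Λ = Σ_{w ∈ S_Λ} a_w`, where `aw` computes the elements `a_w`. -/
def xlam [NeZero n] (aw : Equiv.Perm (Fin n) → CH k m n v q) (Λ : Multipartition m n) :
    CH k m n v q :=
  ∑ w : Equiv.Perm (Fin n), if InRowStab m n Λ w then aw w else 0

/-- `a_kk = n − |λ^{(1)}| − ⋯ − |λ^{(kk)}|`. -/
def aVal (Λ : Multipartition m n) (kk : ℕ) : ℕ := n - Λ.compSizeUpto kk

/-- The element `u_a = ∏_{kk} (L_1 − v_kk)(L_2 − v_kk)⋯(L_{a_kk} − v_kk)`. -/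
def ua [NeZero n] (Λ : Multipartition m n) : CH k m n v q :=
  (List.ofFn fun kk : Fin m =>
    (List.ofFn fun ii : Fin n =>
      if ii.1 < aVal m n Λ (kk.1 + 1) then
        murphy k m n v q ii - algebraMap k (CH k m n v q) (v kk)
      else 1).prod).prod

/-- The element `m_Λ = x_Λ u_a`. -/
def mlam [NeZero n] (aw : Equiv.Perm (Fin n) → CH k m n v q) (Λ : Multipartition m n) :
    CH k m n v q :=
  xlam k m n v q aw Λ * ua k m n v q Λ

/-- The element `m_{st} = a_{d(s)}^* ⬝ m_Λ ⬝ a_{d(t)}`;  here `aw` computes the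
elements `a_w`, `σ` is the `*` anti-involution and `d` computes the permutations `d(t)`. -/
def mst [NeZero n] (aw : Equiv.Perm (Fin n) → CH k m n v q) (σ : CH k m n v q →ₗ[k] CH k m n v q)
    (d : ∀ Λ : Multipartition m n, StdTableau Λ → Equiv.Perm (Fin n))
    {Λ : Multipartition m n} (s t : StdTableau Λ) : CH k m n v q :=
  σ (aw (d Λ s)) * mlam k m n v q aw Λ * aw (d Λ t)

/-- `σ` is the `*` anti-involution: the `k`-linear anti-automorphism fixing the generators. -/
def IsStar [NeZero n] (σ : CH k m n v q →ₗ[k] CH k m n v q) : Prop :=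
  σ 1 = 1 ∧ (∀ x y, σ (x * y) = σ y * σ x) ∧ ∀ t, t < n → σ (gen k m n v q t) = gen k m n v q t

/-- The set of elements `m_{uv}`, for `u, v` standard tableaux of a common shape `M ▷ Λ`. -/
def IsetSet [NeZero n] (aw : Equiv.Perm (Fin n) → CH k m n v q)
    (σ : CH k m n v q →ₗ[k] CH k m n v q)
    (d : ∀ Λ : Multipartition m n, StdTableau Λ → Equiv.Perm (Fin n))
    (Λ : Multipartition m n) : Set (CH k m n v q) :=
  {x | ∃ (M : Multipartition m n) (_ : M.StrictDom Λ) (u v' : StdTableau M),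
    x = mst k m n v q aw σ d u v'}

/-- `I_Λ`, the `k`-span of the `m_{uv}` with shape strictly dominating `Λ`. -/
def Ilam [NeZero n] (aw : Equiv.Perm (Fin n) → CH k m n v q)
    (σ : CH k m n v q →ₗ[k] CH k m n v q)
    (d : ∀ Λ : Multipartition m n, StdTableau Λ → Equiv.Perm (Fin n))
    (Λ : Multipartition m n) : Submodule k (CH k m n v q) :=
  Submodule.span k (IsetSet k m n v q aw σ d Λ)

/-- The image `z_Λ h` of `m_Λ h` in the quotient `H_n / I_Λ`. -/
def zh [NeZero n] (aw : Equiv.Perm (Fin n) → CH k m n v q)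
    (σ : CH k m n v q →ₗ[k] CH k m n v q)
    (d : ∀ Λ : Multipartition m n, StdTableau Λ → Equiv.Perm (Fin n))
    (Λ : Multipartition m n) (h : CH k m n v q) :
    CH k m n v q ⧸ Ilam k m n v q aw σ d Λ :=
  Submodule.Quotient.mk (mlam k m n v q aw Λ * h)

/-- The Specht module `S^Λ = z_Λ ⬝ (H_n/I_Λ)`, as a `k`-submodule of `H_n / I_Λ`. -/
def Specht [NeZero n] (aw : Equiv.Perm (Fin n) → CH k m n v q)
    (σ : CH k m n v q →ₗ[k] CH k m n v q)
    (d : ∀ Λ : Multipartition m n, StdTableau Λ → Equiv.Perm (Fin n))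
    (Λ : Multipartition m n) :
    Submodule k (CH k m n v q ⧸ Ilam k m n v q aw σ d Λ) :=
  Submodule.span k (Set.range (zh k m n v q aw σ d Λ))

/-- The generator `z_Λ h` as an element of the Specht module. -/
def zhS [NeZero n] (aw : Equiv.Perm (Fin n) → CH k m n v q)
    (σ : CH k m n v q →ₗ[k] CH k m n v q)
    (d : ∀ Λ : Multipartition m n, StdTableau Λ → Equiv.Perm (Fin n))
    (Λ : Multipartition m n) (h : CH k m n v q) :
    Specht k m n v q aw σ d Λ :=
  ⟨zh k m n v q aw σ d Λ h, Submodule.subset_span ⟨h, rfl⟩⟩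

/-!
Let `P = k[X_1, …, X_n]`. The generators `a_2, …, a_n` act on `P ⊗ k[S_n]` by Demazure–Lusztig
operators, with `X_i` acting as the Murphy element `L_i` of the affine Hecke algebra. Let
`g = (t - v_1) ⋯ (t - v_m)`. The polynomials of degree less than `m` in every variable span a
subspace of `P ⊗ k[S_n]` that is stable under these operators, because divided differences do not
raise the degree in any single variable; letting `a_1` act on it as multiplication by `X_1` followed
by reduction modulo `g(X_1)` gives a representation of `H_n`. In it, `L_i` multiplies by `X_i` as
long as the degree bound is not exceeded, so `L^e a_w` maps `1 ⊗ 1` to `X^e ⊗ w`. This proves linear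
independence.

Conversely, `Φ : f ⊗ w ↦ f(L_1, …, L_n) a_w` is a map `P ⊗ k[S_n] → H_n` which intertwines the
operators above with left multiplication by the generators. Thus every `h ∈ H_n` equals
`Φ(h · (1 ⊗ 1))`, and `h · (1 ⊗ 1)` is a combination of the vectors `X^e ⊗ w` with all `e_i < m`.
-/

section DividedDifference

open MvPolynomial

variable {σ R : Type*} [CommRing R]

lemma X_sub_X_ne_zero [Nontrivial R] {i j : σ} (hij : i ≠ j) :
    (X j - X i : MvPolynomial σ R) ≠ 0 :=
  sub_ne_zero.2 fun h => hij (X_injective h).symm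

variable [DecidableEq σ]

lemma X_sub_X_dvd_X_sub_X_swap (i j a : σ) :
    (X j - X i : MvPolynomial σ R) ∣ X a - X (Equiv.swap i j a) := by
  rcases eq_or_ne a i with rfl | hi
  · rw [Equiv.swap_apply_left, ← dvd_neg, neg_sub]
  rcases eq_or_ne a j with rfl | hj
  · rw [Equiv.swap_apply_right]
  · simp [Equiv.swap_apply_of_ne_of_ne hi hj]

lemma X_sub_X_dvd_sub_rename_swap (i j : σ) (f : MvPolynomial σ R) :
    X j - X i ∣ f - rename (Equiv.swap i j) f := by
  induction f using MvPolynomial.induction_on with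
  | C a => simp
  | add p r hp hr =>
    rw [map_add, add_sub_add_comm]
    exact dvd_add hp hr
  | mul_X p a hp =>
    have split : p * X a - rename (Equiv.swap i j) (p * X a) =
        (p - rename (Equiv.swap i j) p) * X a +
          rename (Equiv.swap i j) p * (X a - X (Equiv.swap i j a)) := by
      rw [map_mul, rename_X]; ring
    rw [split]
    exact dvd_add (hp.mul_right _) ((X_sub_X_dvd_X_sub_X_swap i j a).mul_left _)

variable [IsDomain R]

/-- The divided difference `f ↦ X_j (f - s f) / (X_j - X_i)`, where `s` exchanges `X_i` and `X_j`;
it is set to zero when `i = j`. -/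
def divDiff (i j : σ) : MvPolynomial σ R →ₗ[R] MvPolynomial σ R where
  toFun f := if i = j then 0 else X j * (X_sub_X_dvd_sub_rename_swap i j f).choose
  map_add' f g := by
    split_ifs with hij
    · rw [add_zero]
    · rw [← mul_add]
      congr 1
      refine mul_left_cancel₀ (X_sub_X_ne_zero hij) ?_
      rw [mul_add, ← (X_sub_X_dvd_sub_rename_swap i j (f + g)).choose_spec,
        ← (X_sub_X_dvd_sub_rename_swap i j f).choose_spec,
        ← (X_sub_X_dvd_sub_rename_swap i j g).choose_spec, map_add, add_sub_add_comm]
  map_smul' c f := by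
    split_ifs with hij
    · rw [smul_zero]
    · rw [RingHom.id_apply, ← mul_smul_comm]
      congr 1
      refine mul_left_cancel₀ (X_sub_X_ne_zero hij) ?_
      rw [mul_smul_comm, ← (X_sub_X_dvd_sub_rename_swap i j (c • f)).choose_spec,
        ← (X_sub_X_dvd_sub_rename_swap i j f).choose_spec, map_smul, smul_sub]

lemma X_sub_X_mul_divDiff (i j : σ) (f : MvPolynomial σ R) :
    (X j - X i) * divDiff i j f = X j * (f - rename (Equiv.swap i j) f) := by
  rcases eq_or_ne i j with rfl | hij
  · simp
  · have quotient_spec := (X_sub_X_dvd_sub_rename_swap i j f).choose_spec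
    simp only [divDiff, LinearMap.coe_mk, AddHom.coe_mk, if_neg hij]
    conv_rhs => rw [quotient_spec]
    ring

variable {i j : σ}

lemma divDiff_eq_of_mul_eq (hij : i ≠ j) {f g : MvPolynomial σ R}
    (hg : (X j - X i) * g = X j * (f - rename (Equiv.swap i j) f)) : divDiff i j f = g :=
  mul_left_cancel₀ (X_sub_X_ne_zero hij) ((X_sub_X_mul_divDiff i j f).trans hg.symm)

lemma divDiff_self (i : σ) (f : MvPolynomial σ R) : divDiff i i f = 0 :=
  if_pos rfl

lemma divDiff_mul (f g : MvPolynomial σ R) :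
    divDiff i j (f * g) = rename (Equiv.swap i j) f * divDiff i j g + divDiff i j f * g := by
  rcases eq_or_ne i j with rfl | hij
  · simp [divDiff_self]
  refine divDiff_eq_of_mul_eq hij ?_
  rw [map_mul]
  linear_combination rename (Equiv.swap i j) f * X_sub_X_mul_divDiff i j g +
    g * X_sub_X_mul_divDiff i j f

lemma divDiff_eq_zero_of_rename_swap_eq {f : MvPolynomial σ R}
    (hf : rename (Equiv.swap i j) f = f) : divDiff i j f = 0 := by
  rcases eq_or_ne i j with rfl | hij
  · exact divDiff_self i f
  · exact divDiff_eq_of_mul_eq hij (by rw [hf, sub_self, mul_zero, mul_zero])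

lemma divDiff_X_left (hij : i ≠ j) : divDiff i j (X i : MvPolynomial σ R) = -X j :=
  divDiff_eq_of_mul_eq hij (by rw [rename_X, Equiv.swap_apply_left]; ring)

lemma divDiff_X_right (hij : i ≠ j) : divDiff i j (X j : MvPolynomial σ R) = X j :=
  divDiff_eq_of_mul_eq hij (by rw [rename_X, Equiv.swap_apply_right]; ring)

end DividedDifference

section RestrictDegree

open MvPolynomial

variable {σ R : Type*} [CommRing R] {d : ℕ} {f : MvPolynomial σ R}

lemma mem_restrictDegree_iff_degreeOf_le :
    f ∈ restrictDegree σ R d ↔ ∀ i, degreeOf i f ≤ d := by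
  simp only [mem_restrictDegree, degreeOf_le_iff]
  exact ⟨fun h i s hs => h s hs i, fun h s hs i => h i s hs⟩

lemma rename_mem_restrictDegree (e : Equiv.Perm σ) (hf : f ∈ restrictDegree σ R d) :
    rename e f ∈ restrictDegree σ R d := by
  rw [mem_restrictDegree_iff_degreeOf_le] at hf ⊢
  intro a
  rw [← e.apply_symm_apply a, degreeOf_rename_of_injective e.injective]
  exact hf _

lemma degreeOf_X_sub_X_left [Nontrivial R] {i j : σ} (hij : i ≠ j) :
    degreeOf j (X j - X i : MvPolynomial σ R) = 1 := by
  rw [sub_eq_add_neg, degreeOf_add_eq_of_degreeOf_lt, degreeOf_X_self]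
  rw [degreeOf_neg, degreeOf_X_of_ne hij.symm, degreeOf_X_self]
  exact zero_lt_one

lemma degreeOf_X_sub_X_right [Nontrivial R] {i j : σ} (hij : i ≠ j) :
    degreeOf i (X j - X i : MvPolynomial σ R) = 1 := by
  rw [← degreeOf_neg, neg_sub, degreeOf_X_sub_X_left hij.symm]

variable [IsDomain R] [DecidableEq σ] {i j : σ}

lemma degreeOf_X_sub_X_add_degreeOf_divDiff_le (hij : i ≠ j) (hf : f ∈ restrictDegree σ R d)
    (hDf : divDiff i j f ≠ 0) (a : σ) :
    degreeOf a (X j - X i : MvPolynomial σ R) + degreeOf a (divDiff i j f) ≤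
      degreeOf a (X j : MvPolynomial σ R) + d := by
  have difference_mem : f - rename (Equiv.swap i j) f ∈ restrictDegree σ R d :=
    sub_mem hf (rename_mem_restrictDegree _ hf)
  rw [← degreeOf_mul_eq (X_sub_X_ne_zero hij) hDf, X_sub_X_mul_divDiff]
  exact (degreeOf_mul_le _ _ _).trans
    (add_le_add_right (mem_restrictDegree_iff_degreeOf_le.1 difference_mem a) _)

lemma divDiff_mem_restrictDegree (hf : f ∈ restrictDegree σ R d) :
    divDiff i j f ∈ restrictDegree σ R d := by
  by_cases hDf : divDiff i j f = 0
  · rw [hDf]; exact zero_mem _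
  have hij : i ≠ j := by rintro rfl; exact hDf (divDiff_self _ f)
  refine mem_restrictDegree_iff_degreeOf_le.2 fun a => ?_
  have bound := degreeOf_X_sub_X_add_degreeOf_divDiff_le hij hf hDf a
  rcases eq_or_ne a j with rfl | haj
  · rw [degreeOf_X_sub_X_left hij, degreeOf_X_self] at bound
    lia
  · rw [degreeOf_X_of_ne haj] at bound
    lia

lemma degreeOf_divDiff_lt (hf : f ∈ restrictDegree σ R d) (hDf : divDiff i j f ≠ 0) :
    degreeOf i (divDiff i j f) < d := by
  have hij : i ≠ j := by rintro rfl; exact hDf (divDiff_self _ f)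
  have bound := degreeOf_X_sub_X_add_degreeOf_divDiff_le hij hf hDf i
  rw [degreeOf_X_sub_X_right hij, degreeOf_X_of_ne hij] at bound
  lia

end RestrictDegree

section TopCoefficient

open MvPolynomial

variable {σ R : Type*} [CommRing R] {d : ℕ} {i : σ} {f : MvPolynomial σ R}

/-- The coefficient of `X_i ^ d` in polynomials of degree at most `d` in `X_i`; in general, the
quotient of the division by `X_i ^ d`. -/
def topCoeff (d : ℕ) (i : σ) : MvPolynomial σ R →ₗ[R] MvPolynomial σ R where
  toFun f := f.divMonomial (Finsupp.single i d)
  map_add' f g := add_divMonomial f g _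
  map_smul' c f := by ext s; simp only [coeff_divMonomial, coeff_smul, RingHom.id_apply]

lemma coeff_topCoeff (s : σ →₀ ℕ) :
    coeff s (topCoeff d i f) = coeff (Finsupp.single i d + s) f :=
  coeff_divMonomial _ _ _

lemma topCoeff_rename {τ : Type*} (e : σ ≃ τ) :
    topCoeff d (e i) (rename e f) = rename e (topCoeff d i f) := by
  ext s
  obtain ⟨s, rfl⟩ := Finsupp.mapDomain_surjective e.surjective s
  rw [coeff_topCoeff, ← Finsupp.mapDomain_single, ← Finsupp.mapDomain_add,
    coeff_rename_mapDomain _ e.injective, coeff_rename_mapDomain _ e.injective, coeff_topCoeff]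

lemma topCoeff_monomial_mul {s : σ →₀ ℕ} (hs : s i = 0) (c : R) :
    topCoeff d i (monomial s c * f) = monomial s c * topCoeff d i f := by
  ext t
  have le_iff : s ≤ Finsupp.single i d + t ↔ s ≤ t := by
    refine forall_congr' fun a => ?_
    rcases eq_or_ne a i with rfl | ha
    · simp [hs]
    · simp [Finsupp.single_eq_of_ne ha]
  simp only [coeff_topCoeff, coeff_monomial_mul', le_iff]
  split_ifs with hst
  · rw [add_tsub_assoc_of_le hst]
  · rfl

lemma topCoeff_mul {p : MvPolynomial σ R} (hp : degreeOf i p = 0) :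
    topCoeff d i (p * f) = p * topCoeff d i f := by
  conv_lhs => rw [p.as_sum, Finset.sum_mul, map_sum]
  conv_rhs => rw [p.as_sum, Finset.sum_mul]
  refine Finset.sum_congr rfl fun s hs => topCoeff_monomial_mul ?_ _
  exact Nat.le_zero.1 (hp ▸ monomial_le_degreeOf i hs)

lemma topCoeff_eq_zero (hf : degreeOf i f < d) : topCoeff d i f = 0 := by
  ext s
  rw [coeff_topCoeff, coeff_zero]
  by_contra hs
  have exponent_le := monomial_le_degreeOf i (mem_support_iff.2 hs)
  simp only [Finsupp.add_apply, Finsupp.single_eq_same] at exponent_le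
  lia

lemma topCoeff_divDiff [IsDomain R] [DecidableEq σ] {j : σ} (hf : f ∈ restrictDegree σ R d) :
    topCoeff d i (divDiff i j f) = 0 := by
  by_cases hDf : divDiff i j f = 0
  · rw [hDf, map_zero]
  · exact topCoeff_eq_zero (degreeOf_divDiff_lt hf hDf)

lemma topCoeff_mem_restrictDegree (hf : f ∈ restrictDegree σ R d) :
    topCoeff d i f ∈ restrictDegree σ R d := by
  rw [mem_restrictDegree] at hf ⊢
  intro s hs a
  rw [mem_support_iff, coeff_topCoeff, ← mem_support_iff] at hs
  exact le_trans (by simp) (hf _ hs a)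

lemma degreeOf_topCoeff_self (hf : degreeOf i f ≤ d) : degreeOf i (topCoeff d i f) = 0 := by
  rw [← Nat.le_zero, degreeOf_le_iff]
  intro s hs
  rw [mem_support_iff, coeff_topCoeff, ← mem_support_iff] at hs
  have exponent_le := (monomial_le_degreeOf i hs).trans hf
  simp only [Finsupp.add_apply, Finsupp.single_eq_same] at exponent_le
  lia

end TopCoefficient

section MulXMod

open MvPolynomial

variable {σ R : Type*} [CommRing R] {d : ℕ} {i : σ} {f : MvPolynomial σ R}

lemma degreeOf_toMvPolynomial_of_ne {a : σ} (ha : a ≠ i) (g : Polynomial R) :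
    degreeOf a (g.toMvPolynomial i) = 0 := by
  rw [← Nat.le_zero, Polynomial.toMvPolynomial, Polynomial.aeval_eq_sum_range]
  refine (degreeOf_sum_le _ _ _).trans (Finset.sup_le fun t _ => ?_)
  rw [smul_eq_C_mul]
  exact (degreeOf_C_mul_le _ _ _).trans (degreeOf_X_pow_of_ne t ha).le

/-- Multiplication by `X_i` followed by reduction modulo `g(X_i)`, for `g` monic of degree `d + 1`
and polynomials of degree at most `d` in `X_i`. -/
def mulXMod (d : ℕ) (g : Polynomial R) (i : σ) : MvPolynomial σ R →ₗ[R] MvPolynomial σ R :=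
  LinearMap.mulLeft R (X i) - LinearMap.mulLeft R (g.toMvPolynomial i) ∘ₗ topCoeff d i

lemma mulXMod_apply (g : Polynomial R) (f : MvPolynomial σ R) :
    mulXMod d g i f = X i * f - g.toMvPolynomial i * topCoeff d i f :=
  rfl

lemma X_mul_modMonomial_mem_restrictDegree (hf : f ∈ restrictDegree σ R d) :
    X i * f.modMonomial (Finsupp.single i d) ∈ restrictDegree σ R d := by
  rw [mem_restrictDegree] at hf ⊢
  intro s hs a
  rw [support_X_mul] at hs
  obtain ⟨t, ht, rfl⟩ := Finset.mem_map.1 hs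
  rw [mem_support_iff] at ht
  have not_le : ¬ Finsupp.single i d ≤ t := fun h => ht (coeff_modMonomial_of_le f h)
  rw [coeff_modMonomial_of_not_le f not_le, ← mem_support_iff] at ht
  rw [Finsupp.single_le_iff] at not_le
  rw [addLeftEmbedding_apply, Finsupp.add_apply]
  rcases eq_or_ne a i with rfl | ha
  · rw [Finsupp.single_eq_same]
    lia
  · rw [Finsupp.single_eq_of_ne ha, zero_add]
    exact hf t ht a

lemma mulXMod_eq_add (g : Polynomial R) (f : MvPolynomial σ R) :
    mulXMod d g i f = X i * f.modMonomial (Finsupp.single i d) +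
      (Polynomial.X ^ (d + 1) - g).toMvPolynomial i * topCoeff d i f := by
  have division := f.divMonomial_add_modMonomial (Finsupp.single i d)
  rw [← X_pow_eq_monomial] at division
  rw [mulXMod_apply, map_sub, map_pow, Polynomial.toMvPolynomial_X]
  change _ = _ + (_ - _) * f.divMonomial (Finsupp.single i d)
  change X i * f - _ * f.divMonomial (Finsupp.single i d) = _
  linear_combination -X i * division

lemma natDegree_X_pow_sub_le {g : Polynomial R} (hg : g.Monic) (hd : g.natDegree = d + 1) :
    (Polynomial.X ^ (d + 1) - g).natDegree ≤ d := by
  refine Polynomial.natDegree_le_iff_coeff_eq_zero.2 fun N hN => ?_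
  rw [Polynomial.coeff_sub, Polynomial.coeff_X_pow]
  rcases eq_or_ne N (d + 1) with rfl | hne
  · rw [if_pos rfl, ← hd, hg.coeff_natDegree, sub_self]
  · rw [if_neg hne, Polynomial.coeff_eq_zero_of_natDegree_lt (by lia), sub_zero]

lemma degreeOf_toMvPolynomial_self_le [Nontrivial R] (i : σ) (g : Polynomial R) :
    degreeOf i (g.toMvPolynomial i) ≤ g.natDegree := by
  rw [Polynomial.toMvPolynomial, Polynomial.aeval_eq_sum_range]
  refine (degreeOf_sum_le _ _ _).trans (Finset.sup_le fun t ht => ?_)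
  rw [smul_eq_C_mul]
  refine (degreeOf_C_mul_le _ _ _).trans ?_
  rw [degreeOf_X_self_pow]
  exact Nat.lt_succ_iff.1 (Finset.mem_range.1 ht)

lemma degreeOf_toMvPolynomial_self [Nontrivial R] (i : σ) {g : Polynomial R} (hg : g.Monic)
    (hd : g.natDegree = d + 1) : degreeOf i (g.toMvPolynomial i) = d + 1 := by
  have split : g.toMvPolynomial i =
      X i ^ (d + 1) + -(Polynomial.X ^ (d + 1) - g).toMvPolynomial i := by
    rw [map_sub, map_pow, Polynomial.toMvPolynomial_X]
    ring
  have tail_le := (degreeOf_toMvPolynomial_self_le i _).trans (natDegree_X_pow_sub_le hg hd)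
  rw [split, degreeOf_add_eq_of_degreeOf_lt] <;> rw [degreeOf_X_self_pow]
  rw [degreeOf_neg]
  exact Nat.lt_succ_iff.2 tail_le

lemma mulXMod_mem_restrictDegree [Nontrivial R] {g : Polynomial R} (hg : g.Monic)
    (hd : g.natDegree = d + 1) (hf : f ∈ restrictDegree σ R d) :
    mulXMod d g i f ∈ restrictDegree σ R d := by
  rw [mulXMod_eq_add]
  refine add_mem (X_mul_modMonomial_mem_restrictDegree hf)
    (mem_restrictDegree_iff_degreeOf_le.2 fun a => (degreeOf_mul_le _ _ _).trans ?_)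
  rcases eq_or_ne a i with rfl | ha
  · rw [degreeOf_topCoeff_self (mem_restrictDegree_iff_degreeOf_le.1 hf a), add_zero]
    exact (degreeOf_toMvPolynomial_self_le a _).trans (natDegree_X_pow_sub_le hg hd)
  · rw [degreeOf_toMvPolynomial_of_ne ha, zero_add]
    exact mem_restrictDegree_iff_degreeOf_le.1 (topCoeff_mem_restrictDegree hf) a

lemma eq_zero_of_toMvPolynomial_dvd [IsDomain R] {g : Polynomial R} (hg : g.Monic)
    (hd : g.natDegree = d + 1) (hf : f ∈ restrictDegree σ R d) (h : g.toMvPolynomial i ∣ f) :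
    f = 0 := by
  obtain ⟨r, rfl⟩ := h
  by_contra h0
  have degree_le := mem_restrictDegree_iff_degreeOf_le.1 hf i
  rw [degreeOf_mul_eq (left_ne_zero_of_mul h0) (right_ne_zero_of_mul h0),
    degreeOf_toMvPolynomial_self i hg hd] at degree_le
  lia

end MulXMod

section DemazureLusztig

open MvPolynomial

/-- The space `P ⊗ R[S]` with `P` the polynomial ring on `σ` and `S` the symmetric group of `σ`;
the value at `w` is the coefficient of `w`. -/
abbrev PermPolynomial (σ R : Type*) [CommRing R] : Type _ :=
  Equiv.Perm σ → MvPolynomial σ R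

variable {σ R : Type*} [CommRing R]

/-- The basis vector `1 ⊗ w` of `P ⊗ R[S]`. -/
def permVec (w : Equiv.Perm σ) : PermPolynomial σ R :=
  Pi.single w 1

lemma permVec_apply (w u : Equiv.Perm σ) :
    (permVec w u : MvPolynomial σ R) = if u = w then 1 else 0 :=
  Pi.single_apply w 1 u

lemma sum_smul_permVec [Fintype (Equiv.Perm σ)] (F : PermPolynomial σ R) :
    ∑ w, F w • permVec w = F := by
  funext u
  simp [permVec_apply]

lemma ext_of_X_smul [Finite σ] {M : Type*} [AddCommMonoid M] [Module R M]
    {A B : PermPolynomial σ R →ₗ[R] M} (permVec_eq : ∀ w, A (permVec w) = B (permVec w))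
    (X_smul_eq : ∀ (a : σ) F, A F = B F →
      A ((X a : MvPolynomial σ R) • F) = B ((X a : MvPolynomial σ R) • F)) : A = B := by
  have smul_permVec_eq (w : Equiv.Perm σ) (f : MvPolynomial σ R) :
      A (f • permVec w) = B (f • permVec w) := by
    induction f using MvPolynomial.induction_on with
    | C a => rw [← algebraMap_eq, algebraMap_smul, map_smul, map_smul, permVec_eq]
    | add p r hp hr => rw [add_smul, map_add, map_add, hp, hr]
    | mul_X p a hp => rw [mul_comm, mul_smul, X_smul_eq a _ hp]
  have := Fintype.ofFinite (Equiv.Perm σ)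
  refine LinearMap.ext fun F => ?_
  rw [← sum_smul_permVec F, map_sum, map_sum]
  exact Finset.sum_congr rfl fun w _ => smul_permVec_eq w (F w)

lemma swap_mul_symm_apply [DecidableEq σ] (i j : σ) (w : Equiv.Perm σ) (x : σ) :
    (Equiv.swap i j * w).symm x = w.symm (Equiv.swap i j x) :=
  rfl

variable [LinearOrder σ] {q : R} {i j : σ}

/-- The operator `f ⊗ w ↦ s f ⊗ T_s w` on `P ⊗ R[S]`, where `s` is the transposition `(i j)` and
`T_s w` is the product in the Hecke algebra of the symmetric group, so that `T_s w = s w` if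
`s w` is longer than `w` and `T_s w = q s w + (q - 1) w` otherwise. -/
def heckeSwap (q : R) (i j : σ) : PermPolynomial σ R →ₗ[R] PermPolynomial σ R where
  toFun F w := rename (Equiv.swap i j) (if w.symm j < w.symm i
    then F (Equiv.swap i j * w) + (q - 1) • F w else q • F (Equiv.swap i j * w))
  map_add' F G := by
    funext w
    simp only [Pi.add_apply]
    split_ifs <;> simp only [map_add, map_smul] <;> module
  map_smul' c F := by
    funext w
    simp only [Pi.smul_apply, RingHom.id_apply]
    split_ifs <;> simp only [map_add, map_smul] <;> module

lemma heckeSwap_apply (q : R) (i j : σ) (F : PermPolynomial σ R) (w : Equiv.Perm σ) :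
    heckeSwap q i j F w = rename (Equiv.swap i j) (if w.symm j < w.symm i
      then F (Equiv.swap i j * w) + (q - 1) • F w else q • F (Equiv.swap i j * w)) :=
  rfl

lemma heckeSwap_smul (f : MvPolynomial σ R) (F : PermPolynomial σ R) :
    heckeSwap q i j (f • F) = rename (Equiv.swap i j) f • heckeSwap q i j F := by
  funext w
  simp only [heckeSwap_apply, Pi.smul_apply, smul_eq_mul]
  split_ifs <;> simp only [map_add, map_mul, map_smul, mul_add, mul_smul_comm]

variable [IsDomain R]

/-- The Demazure–Lusztig operator `f ⊗ w ↦ s f ⊗ T_s w + (q - 1) D f ⊗ w`, where `D` is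
`divDiff i j`; it is the action on `P ⊗ R[S]` of the Hecke generator attached to the
transposition `s = (i j)`. -/
def demazureLusztig (q : R) (i j : σ) : PermPolynomial σ R →ₗ[R] PermPolynomial σ R :=
  heckeSwap q i j + (q - 1) • (divDiff i j).compLeft _

lemma demazureLusztig_apply (q : R) (i j : σ) (F : PermPolynomial σ R) (w : Equiv.Perm σ) :
    demazureLusztig q i j F w = heckeSwap q i j F w + (q - 1) • divDiff i j (F w) :=
  rfl

lemma demazureLusztig_smul (f : MvPolynomial σ R) (F : PermPolynomial σ R) :
    demazureLusztig q i j (f • F) = rename (Equiv.swap i j) f • demazureLusztig q i j F +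
      (q - 1) • divDiff i j f • F := by
  funext w
  simp only [demazureLusztig_apply, heckeSwap_smul, Pi.add_apply, Pi.smul_apply, smul_eq_mul,
    divDiff_mul, mul_add, mul_smul_comm, smul_add, add_assoc]

lemma demazureLusztig_X_smul_left (hij : i ≠ j) (F : PermPolynomial σ R) :
    demazureLusztig q i j ((X i : MvPolynomial σ R) • F) =
      (X j : MvPolynomial σ R) • (demazureLusztig q i j F - (q - 1) • F) := by
  rw [demazureLusztig_smul, rename_X, Equiv.swap_apply_left, divDiff_X_left hij]
  module

lemma demazureLusztig_X_smul_right (hij : i ≠ j) (F : PermPolynomial σ R) :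
    demazureLusztig q i j ((X j : MvPolynomial σ R) • F) =
      (X i : MvPolynomial σ R) • demazureLusztig q i j F +
        (X j : MvPolynomial σ R) • (q - 1) • F := by
  rw [demazureLusztig_smul, rename_X, Equiv.swap_apply_right, divDiff_X_right hij,
    smul_comm (q - 1)]

lemma demazureLusztig_smul_of_rename_swap_eq {f : MvPolynomial σ R}
    (hf : rename (Equiv.swap i j) f = f) (F : PermPolynomial σ R) :
    demazureLusztig q i j (f • F) = f • demazureLusztig q i j F := by
  rw [demazureLusztig_smul, hf, divDiff_eq_zero_of_rename_swap_eq hf, zero_smul, smul_zero,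
    add_zero]

lemma demazureLusztig_X_smul_of_ne {a : σ} (hi : a ≠ i) (hj : a ≠ j) (F : PermPolynomial σ R) :
    demazureLusztig q i j ((X a : MvPolynomial σ R) • F) =
      (X a : MvPolynomial σ R) • demazureLusztig q i j F :=
  demazureLusztig_smul_of_rename_swap_eq
    (by rw [rename_X, Equiv.swap_apply_of_ne_of_ne hi hj]) F

lemma demazureLusztig_permVec_apply (q : R) (i j : σ) (w u : Equiv.Perm σ) :
    demazureLusztig q i j (permVec w) u = if u.symm j < u.symm i
      then permVec (Equiv.swap i j * w) u + (q - 1) • permVec w u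
      else q • permVec (Equiv.swap i j * w) u := by
  have permVec_swap_mul : (permVec w (Equiv.swap i j * u) : MvPolynomial σ R) =
      permVec (Equiv.swap i j * w) u := by
    simp only [permVec_apply, ← eq_inv_mul_iff_mul_eq, Equiv.swap_inv]
  have rename_permVec (w : Equiv.Perm σ) :
      rename (Equiv.swap i j) (permVec w u : MvPolynomial σ R) = permVec w u := by
    rw [permVec_apply]; split_ifs <;> simp only [map_one, map_zero]
  rw [demazureLusztig_apply, heckeSwap_apply, divDiff_eq_zero_of_rename_swap_eq (rename_permVec w),
    smul_zero, add_zero, permVec_swap_mul]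
  split_ifs <;> simp only [map_add, map_smul, rename_permVec]

lemma demazureLusztig_permVec_of_lt {w : Equiv.Perm σ} (h : w.symm i < w.symm j) :
    demazureLusztig q i j (permVec w) = permVec (Equiv.swap i j * w) := by
  funext u
  rw [demazureLusztig_permVec_apply]
  split_ifs with hu
  · have u_ne : u ≠ w := by rintro rfl; exact hu.not_gt h
    rw [permVec_apply w, if_neg u_ne, smul_zero, add_zero]
  · have u_ne : u ≠ Equiv.swap i j * w := by rintro rfl; simp [swap_mul_symm_apply, h] at hu
    rw [permVec_apply, if_neg u_ne, smul_zero]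

lemma demazureLusztig_permVec_of_gt {w : Equiv.Perm σ} (h : w.symm j < w.symm i) :
    demazureLusztig q i j (permVec w) =
      q • permVec (Equiv.swap i j * w) + (q - 1) • permVec w := by
  funext u
  rw [demazureLusztig_permVec_apply, Pi.add_apply, Pi.smul_apply, Pi.smul_apply]
  split_ifs with hu
  · have u_ne : u ≠ Equiv.swap i j * w := by rintro rfl; simp [swap_mul_symm_apply, h.not_gt] at hu
    rw [permVec_apply (_ * w), if_neg u_ne, smul_zero]
  · have u_ne : u ≠ w := by rintro rfl; exact hu h
    rw [permVec_apply w, if_neg u_ne, smul_zero, add_zero]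

lemma demazureLusztig_comm_permVec {a b : σ} (hij : i ≠ j) (hab : a ≠ b) (hai : a ≠ i)
    (haj : a ≠ j) (hbi : b ≠ i) (hbj : b ≠ j) (w : Equiv.Perm σ) :
    demazureLusztig q i j (demazureLusztig q a b (permVec w)) =
      demazureLusztig q a b (demazureLusztig q i j (permVec w)) := by
  have swap_comm : Equiv.swap i j * (Equiv.swap a b * w) =
      Equiv.swap a b * (Equiv.swap i j * w) := by
    rw [← mul_assoc, ← mul_assoc, (Equiv.Perm.disjoint_swap_swap (by
      simp [hij, hab, hai.symm, haj.symm, hbi.symm, hbj.symm])).commute.eq]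
  have swap_a := Equiv.swap_apply_of_ne_of_ne hai haj
  have swap_b := Equiv.swap_apply_of_ne_of_ne hbi hbj
  have swap_i := Equiv.swap_apply_of_ne_of_ne hai.symm hbi.symm
  have swap_j := Equiv.swap_apply_of_ne_of_ne haj.symm hbj.symm
  rcases lt_or_gt_of_ne (w.symm.injective.ne hij) with h | h <;>
    rcases lt_or_gt_of_ne (w.symm.injective.ne hab) with h' | h' <;>
    simp only [demazureLusztig_permVec_of_lt, demazureLusztig_permVec_of_gt, h, h',
      swap_mul_symm_apply, swap_comm, map_add, map_smul, swap_a, swap_b, swap_i, swap_j]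
  module

lemma demazureLusztig_braid_permVec {l : σ} (hij : i ≠ j) (hjl : j ≠ l) (hil : i ≠ l)
    (w : Equiv.Perm σ) :
    demazureLusztig q i j (demazureLusztig q j l (demazureLusztig q i j (permVec w))) =
      demazureLusztig q j l (demazureLusztig q i j (demazureLusztig q j l (permVec w))) := by
  have swap_braid : Equiv.swap i j * (Equiv.swap j l * (Equiv.swap i j * w)) =
      Equiv.swap j l * (Equiv.swap i j * (Equiv.swap j l * w)) := by
    have left_eq := Equiv.swap_mul_swap_mul_swap hjl.symm hil.symm
    have right_eq := Equiv.swap_mul_swap_mul_swap hij hil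
    rw [Equiv.swap_comm j i, Equiv.swap_comm l j] at left_eq
    simp only [← mul_assoc]
    rw [left_eq, right_eq, Equiv.swap_comm]
  have swap_l := Equiv.swap_apply_of_ne_of_ne hil.symm hjl.symm
  have swap_i := Equiv.swap_apply_of_ne_of_ne hij hil
  rcases lt_or_gt_of_ne (w.symm.injective.ne hij) with h | h <;>
    rcases lt_or_gt_of_ne (w.symm.injective.ne hjl) with h' | h' <;>
    rcases lt_or_gt_of_ne (w.symm.injective.ne hil) with h'' | h'' <;>
    first
    | order
    | simp only [demazureLusztig_permVec_of_lt, demazureLusztig_permVec_of_gt, h, h', h'',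
        swap_mul_symm_apply, Equiv.swap_apply_left, Equiv.swap_apply_right, swap_l, swap_i,
        Equiv.swap_mul_self_mul, swap_braid, map_add, map_smul]
      try module

variable [Finite σ]

lemma demazureLusztig_demazureLusztig (hij : i ≠ j) (F : PermPolynomial σ R) :
    demazureLusztig q i j (demazureLusztig q i j F) =
      (q - 1) • demazureLusztig q i j F + q • F := by
  refine LinearMap.congr_fun (ext_of_X_smul
    (A := demazureLusztig q i j ∘ₗ demazureLusztig q i j)
    (B := (q - 1) • demazureLusztig q i j + q • LinearMap.id) (fun w => ?_) fun a F hF => ?_) F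
  · simp only [LinearMap.comp_apply, LinearMap.add_apply, LinearMap.smul_apply,
      LinearMap.id_apply]
    rcases lt_or_gt_of_ne (w.symm.injective.ne hij) with h | h
    · rw [demazureLusztig_permVec_of_lt h,
        demazureLusztig_permVec_of_gt (by simpa [swap_mul_symm_apply] using h),
        Equiv.swap_mul_self_mul]
      module
    · rw [demazureLusztig_permVec_of_gt h, map_add, map_smul, map_smul,
        demazureLusztig_permVec_of_lt (by simpa [swap_mul_symm_apply] using h),
        demazureLusztig_permVec_of_gt h, Equiv.swap_mul_self_mul]
      module
  · simp only [LinearMap.comp_apply, LinearMap.add_apply, LinearMap.smul_apply,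
      LinearMap.id_apply] at hF ⊢
    rcases eq_or_ne a i with rfl | hi
    · simp only [demazureLusztig_X_smul_left hij, demazureLusztig_X_smul_right hij, map_sub,
        map_smul, hF]
      module
    rcases eq_or_ne a j with rfl | hj
    · simp only [demazureLusztig_X_smul_left hij, demazureLusztig_X_smul_right hij, map_add,
        map_smul, hF]
      module
    · simp only [demazureLusztig_X_smul_of_ne hi hj, hF]
      module

lemma demazureLusztig_X_smul_demazureLusztig (hij : i ≠ j) (F : PermPolynomial σ R) :
    demazureLusztig q i j ((X i : MvPolynomial σ R) • demazureLusztig q i j F) =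
      (X j : MvPolynomial σ R) • q • F := by
  rw [demazureLusztig_X_smul_left hij, demazureLusztig_demazureLusztig hij, add_sub_cancel_left]

lemma demazureLusztig_comm {a b : σ} (hij : i ≠ j) (hab : a ≠ b) (hai : a ≠ i) (haj : a ≠ j)
    (hbi : b ≠ i) (hbj : b ≠ j) (F : PermPolynomial σ R) :
    demazureLusztig q i j (demazureLusztig q a b F) =
      demazureLusztig q a b (demazureLusztig q i j F) := by
  refine LinearMap.congr_fun (ext_of_X_smul (A := demazureLusztig q i j ∘ₗ demazureLusztig q a b)
    (B := demazureLusztig q a b ∘ₗ demazureLusztig q i j)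
    (fun w => ?_) fun c F hF => ?_) F
  · simp only [LinearMap.comp_apply]
    exact demazureLusztig_comm_permVec hij hab hai haj hbi hbj w
  rw [LinearMap.comp_apply, LinearMap.comp_apply] at hF ⊢
  have X_i := demazureLusztig_X_smul_of_ne (q := q) hai.symm hbi.symm
  have X_j := demazureLusztig_X_smul_of_ne (q := q) haj.symm hbj.symm
  have X_a := demazureLusztig_X_smul_of_ne (q := q) hai haj
  have X_b := demazureLusztig_X_smul_of_ne (q := q) hbi hbj
  rcases eq_or_ne c i with rfl | hci
  · simp only [X_i, X_j, demazureLusztig_X_smul_left hij, map_sub, map_smul, hF]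
  rcases eq_or_ne c j with rfl | hcj
  · simp only [X_i, X_j, demazureLusztig_X_smul_right hij, map_add, map_smul, hF]
  rcases eq_or_ne c a with rfl | hca
  · simp only [X_a, X_b, demazureLusztig_X_smul_left hab, map_sub, map_smul, hF]
  rcases eq_or_ne c b with rfl | hcb
  · simp only [X_a, X_b, demazureLusztig_X_smul_right hab, map_add, map_smul, hF]
  · simp only [demazureLusztig_X_smul_of_ne hci hcj, demazureLusztig_X_smul_of_ne hca hcb, hF]

lemma demazureLusztig_braid {l : σ} (hij : i ≠ j) (hjl : j ≠ l) (hil : i ≠ l)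
    (F : PermPolynomial σ R) :
    demazureLusztig q i j (demazureLusztig q j l (demazureLusztig q i j F)) =
      demazureLusztig q j l (demazureLusztig q i j (demazureLusztig q j l F)) := by
  refine LinearMap.congr_fun (ext_of_X_smul
    (A := demazureLusztig q i j ∘ₗ demazureLusztig q j l ∘ₗ demazureLusztig q i j)
    (B := demazureLusztig q j l ∘ₗ demazureLusztig q i j ∘ₗ demazureLusztig q j l)
    (fun w => ?_) fun c F hF => ?_) F
  · simp only [LinearMap.comp_apply]
    exact demazureLusztig_braid_permVec hij hjl hil w
  simp only [LinearMap.comp_apply] at hF ⊢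
  have X_i := demazureLusztig_X_smul_of_ne (q := q) hij hil
  have X_l := demazureLusztig_X_smul_of_ne (q := q) hil.symm hjl.symm
  have quadratic_ij := demazureLusztig_demazureLusztig (q := q) hij
  have quadratic_jl := demazureLusztig_demazureLusztig (q := q) hjl
  have left_ij := demazureLusztig_X_smul_left (q := q) hij
  have left_jl := demazureLusztig_X_smul_left (q := q) hjl
  have right_ij := demazureLusztig_X_smul_right (q := q) hij
  have right_jl := demazureLusztig_X_smul_right (q := q) hjl
  rcases eq_or_ne c i with rfl | hci
  · simp only [X_i, X_l, left_ij, left_jl, map_sub, map_smul, quadratic_ij, quadratic_jl, hF]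
    module
  rcases eq_or_ne c j with rfl | hcj
  · simp only [X_i, X_l, left_ij, left_jl, right_ij, right_jl, map_sub, map_add, map_smul, hF]
    module
  rcases eq_or_ne c l with rfl | hcl
  · simp only [X_i, X_l, left_jl, right_ij, right_jl, map_add, map_smul, quadratic_ij,
      quadratic_jl, hF]
    module
  · simp only [demazureLusztig_X_smul_of_ne hci hcj, demazureLusztig_X_smul_of_ne hcj hcl, hF]

end DemazureLusztig

section TruncatedModule

open MvPolynomial

variable {σ R : Type*} [CommRing R] {d : ℕ} {g : Polynomial R} {i j : σ}

/-- The vectors of `P ⊗ R[S]` whose exponents are all at most `d`; they represent the quotient of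
`P ⊗ R[S]` on which the cyclotomic Hecke algebra with `d + 1` parameters acts. -/
def truncated (σ R : Type*) [CommRing R] (d : ℕ) : Submodule R (PermPolynomial σ R) :=
  Submodule.pi Set.univ fun _ => restrictDegree σ R d

lemma mem_truncated {F : PermPolynomial σ R} :
    F ∈ truncated σ R d ↔ ∀ w, F w ∈ restrictDegree σ R d := by
  simp only [truncated, Submodule.mem_pi, Set.mem_univ, true_imp_iff]

/-- `topCoeff d i` on each coefficient of a vector of `P ⊗ R[S]`. -/
def topCoeffVec (d : ℕ) (i : σ) : PermPolynomial σ R →ₗ[R] PermPolynomial σ R :=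
  (topCoeff d i).compLeft _

lemma topCoeffVec_apply (F : PermPolynomial σ R) (w : Equiv.Perm σ) :
    topCoeffVec d i F w = topCoeff d i (F w) :=
  rfl

lemma topCoeffVec_smul {p : MvPolynomial σ R} (hp : degreeOf i p = 0) (F : PermPolynomial σ R) :
    topCoeffVec d i (p • F) = p • topCoeffVec d i F :=
  funext fun _ => topCoeff_mul hp

/-- `mulXMod d g i` on each coefficient of a vector of `P ⊗ R[S]`, by which the first generator
of the cyclotomic Hecke algebra acts. -/
def mulXModVec (d : ℕ) (g : Polynomial R) (i : σ) : PermPolynomial σ R →ₗ[R] PermPolynomial σ R :=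
  (mulXMod d g i).compLeft _

lemma mulXModVec_eq (F : PermPolynomial σ R) :
    mulXModVec d g i F =
      (X i : MvPolynomial σ R) • F - g.toMvPolynomial i • topCoeffVec d i F :=
  rfl

lemma mulXModVec_mem_truncated [Nontrivial R] (hg : g.Monic) (hd : g.natDegree = d + 1)
    {F : PermPolynomial σ R} (hF : F ∈ truncated σ R d) :
    mulXModVec d g i F ∈ truncated σ R d :=
  mem_truncated.2 fun w => mulXMod_mem_restrictDegree hg hd (mem_truncated.1 hF w)

lemma topCoeffVec_mulXModVec (hij : i ≠ j) (F : PermPolynomial σ R) :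
    topCoeffVec d j (mulXModVec d g i F) = (X i : MvPolynomial σ R) • topCoeffVec d j F -
      g.toMvPolynomial i • topCoeffVec d j (topCoeffVec d i F) := by
  rw [mulXModVec_eq, map_sub, topCoeffVec_smul (degreeOf_X_of_ne hij.symm),
    topCoeffVec_smul (degreeOf_toMvPolynomial_of_ne hij.symm g)]

lemma heckeSwap_mem_truncated [LinearOrder σ] {q : R} {F : PermPolynomial σ R}
    (hF : F ∈ truncated σ R d) :
    heckeSwap q i j F ∈ truncated σ R d := by
  rw [mem_truncated] at hF ⊢
  intro w
  refine rename_mem_restrictDegree _ ?_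
  split_ifs
  · exact add_mem (hF _) (Submodule.smul_mem _ _ (hF _))
  · exact Submodule.smul_mem _ _ (hF _)

lemma topCoeffVec_heckeSwap [LinearOrder σ] (q : R) (F : PermPolynomial σ R) :
    topCoeffVec d i (heckeSwap q i j F) = heckeSwap q i j (topCoeffVec d j F) := by
  funext w
  have topCoeff_rename_swap (f : MvPolynomial σ R) :
      topCoeff d i (rename (Equiv.swap i j) f) = rename (Equiv.swap i j) (topCoeff d j f) := by
    have commutes := topCoeff_rename (d := d) (i := j) (f := f) (Equiv.swap i j)
    rwa [Equiv.swap_apply_right] at commutes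
  simp only [topCoeffVec_apply, heckeSwap_apply, topCoeff_rename_swap]
  split_ifs <;> simp only [map_add, map_smul]

lemma heckeSwap_topCoeffVec_mulXModVec [LinearOrder σ] (hij : i ≠ j) (q : R)
    (F : PermPolynomial σ R) :
    heckeSwap q i j (topCoeffVec d j (mulXModVec d g i F)) =
      (X j : MvPolynomial σ R) • heckeSwap q i j (topCoeffVec d j F) -
        g.toMvPolynomial j • heckeSwap q i j (topCoeffVec d j (topCoeffVec d i F)) := by
  rw [topCoeffVec_mulXModVec hij, map_sub, heckeSwap_smul, heckeSwap_smul, rename_X,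
    rename_toMvPolynomial, Equiv.swap_apply_left]

variable [IsDomain R]

lemma eq_of_sub_eq_toMvPolynomial_smul (hg : g.Monic) (hd : g.natDegree = d + 1)
    {F G : PermPolynomial σ R} (hF : F ∈ truncated σ R d) (hG : G ∈ truncated σ R d)
    (Z : PermPolynomial σ R) (h : F - G = g.toMvPolynomial i • Z) : F = G := by
  refine sub_eq_zero.1 (funext fun w => ?_)
  exact eq_zero_of_toMvPolynomial_dvd hg hd (mem_truncated.1 (sub_mem hF hG) w)
    ⟨Z w, congrFun h w⟩

/-- The restriction of `mulXModVec d g i` to the truncated module. -/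
def truncatedMulX (hg : g.Monic) (hd : g.natDegree = d + 1) (i : σ) :
    Module.End R (truncated σ R d) :=
  (mulXModVec d g i).restrict fun _ hF => mulXModVec_mem_truncated hg hd hF

lemma coe_truncatedMulX (hg : g.Monic) (hd : g.natDegree = d + 1) (F : truncated σ R d) :
    (truncatedMulX hg hd i F : PermPolynomial σ R) = mulXModVec d g i F :=
  rfl

lemma exists_aeval_truncatedMulX_eq (hg : g.Monic) (hd : g.natDegree = d + 1) (r : Polynomial R)
    (F : truncated σ R d) : ∃ Z : PermPolynomial σ R,
      (Polynomial.aeval (truncatedMulX hg hd i) r F : PermPolynomial σ R) =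
        r.toMvPolynomial i • (F : PermPolynomial σ R) + g.toMvPolynomial i • Z := by
  induction r using Polynomial.induction_on with
  | C c =>
    refine ⟨0, ?_⟩
    rw [Polynomial.aeval_C, Module.algebraMap_end_apply, Polynomial.toMvPolynomial_C,
      smul_zero, add_zero, ← algebraMap_eq, algebraMap_smul, Submodule.coe_smul]
  | add p r hp hr =>
    obtain ⟨Y, hY⟩ := hp
    obtain ⟨Z, hZ⟩ := hr
    refine ⟨Y + Z, ?_⟩
    rw [map_add, LinearMap.add_apply, Submodule.coe_add, hY, hZ, map_add]
    module
  | monomial e c ih =>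
    obtain ⟨Z, hZ⟩ := ih
    refine ⟨(X i : MvPolynomial σ R) • Z - topCoeffVec d i (Polynomial.aeval
      (truncatedMulX hg hd i) (Polynomial.C c * Polynomial.X ^ e) F), ?_⟩
    rw [pow_succ', mul_left_comm, map_mul (Polynomial.aeval _) Polynomial.X,
      Module.End.mul_apply, Polynomial.aeval_X, coe_truncatedMulX, mulXModVec_eq,
      map_mul (Polynomial.toMvPolynomial i) Polynomial.X, Polynomial.toMvPolynomial_X]
    conv_lhs => enter [1]; rw [hZ]
    module

lemma aeval_truncatedMulX (hg : g.Monic) (hd : g.natDegree = d + 1) (i : σ) :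
    Polynomial.aeval (truncatedMulX hg hd i) g = 0 := by
  refine LinearMap.ext fun F => Subtype.ext ?_
  obtain ⟨Z, hZ⟩ := exists_aeval_truncatedMulX_eq (i := i) hg hd g F
  refine eq_of_sub_eq_toMvPolynomial_smul (i := i) hg hd (Subtype.mem _) (zero_mem _)
    ((F : PermPolynomial σ R) + Z) ?_
  rw [hZ, LinearMap.zero_apply, Submodule.coe_zero, sub_zero, smul_add]

variable [LinearOrder σ] {q : R} {F : PermPolynomial σ R}

lemma demazureLusztig_mem_truncated (hF : F ∈ truncated σ R d) :
    demazureLusztig q i j F ∈ truncated σ R d :=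
  add_mem (heckeSwap_mem_truncated hF) (Submodule.smul_mem _ _
    (mem_truncated.2 fun w => divDiff_mem_restrictDegree (mem_truncated.1 hF w)))

lemma topCoeffVec_demazureLusztig (hF : F ∈ truncated σ R d) :
    topCoeffVec d i (demazureLusztig q i j F) = heckeSwap q i j (topCoeffVec d j F) := by
  rw [← topCoeffVec_heckeSwap]
  funext w
  rw [topCoeffVec_apply, demazureLusztig_apply, map_add, map_smul,
    topCoeff_divDiff (mem_truncated.1 hF w), smul_zero, add_zero, topCoeffVec_apply]

lemma mulXModVec_demazureLusztig_comm {a b : σ} (hg : g.Monic) (hd : g.natDegree = d + 1)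
    (ha : i ≠ a) (hb : i ≠ b) (hF : F ∈ truncated σ R d) :
    mulXModVec d g i (demazureLusztig q a b F) = demazureLusztig q a b (mulXModVec d g i F) := by
  have rename_g : rename (Equiv.swap a b) (g.toMvPolynomial i) = g.toMvPolynomial i := by
    rw [rename_toMvPolynomial,
      Equiv.swap_apply_of_ne_of_ne ha hb]
  refine eq_of_sub_eq_toMvPolynomial_smul (i := i) hg hd
    (mulXModVec_mem_truncated hg hd (demazureLusztig_mem_truncated hF))
    (demazureLusztig_mem_truncated (mulXModVec_mem_truncated hg hd hF))
    (demazureLusztig q a b (topCoeffVec d i F) - topCoeffVec d i (demazureLusztig q a b F)) ?_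
  rw [mulXModVec_eq, mulXModVec_eq, map_sub, demazureLusztig_X_smul_of_ne ha hb,
    demazureLusztig_smul_of_rename_swap_eq rename_g]
  module

lemma demazureLusztig_toMvPolynomial_smul_toMvPolynomial_smul :
    demazureLusztig q i j (g.toMvPolynomial i • g.toMvPolynomial j • F) =
      g.toMvPolynomial i • g.toMvPolynomial j • demazureLusztig q i j F := by
  rw [smul_smul, demazureLusztig_smul_of_rename_swap_eq, smul_smul]
  rw [map_mul, rename_toMvPolynomial, rename_toMvPolynomial, Equiv.swap_apply_left,
    Equiv.swap_apply_right, mul_comm]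

variable [Finite σ]

lemma demazureLusztig_mulXModVec_demazureLusztig (hij : i ≠ j) (hF : F ∈ truncated σ R d) :
    demazureLusztig q i j (mulXModVec d g i (demazureLusztig q i j F)) =
      (X j : MvPolynomial σ R) • q • F - demazureLusztig q i j
        (g.toMvPolynomial i • heckeSwap q i j (topCoeffVec d j F)) := by
  rw [mulXModVec_eq, map_sub, demazureLusztig_X_smul_demazureLusztig hij,
    topCoeffVec_demazureLusztig hF]

-- Writing `A` for `mulXModVec` and `T` for `demazureLusztig`, both sides are congruent to
-- `X_i • T A T F` modulo `g(X_i)`, and congruent elements of the truncated module are equal.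
lemma mulXModVec_demazureLusztig_braid (hg : g.Monic) (hd : g.natDegree = d + 1) (hij : i ≠ j)
    (hF : F ∈ truncated σ R d) :
    mulXModVec d g i (demazureLusztig q i j (mulXModVec d g i (demazureLusztig q i j F))) =
      demazureLusztig q i j (mulXModVec d g i (demazureLusztig q i j (mulXModVec d g i F))) := by
  have A_mem {G : PermPolynomial σ R} (hG : G ∈ truncated σ R d) :=
    mulXModVec_mem_truncated (i := i) hg hd hG
  have T_mem {G : PermPolynomial σ R} (hG : G ∈ truncated σ R d) :=
    demazureLusztig_mem_truncated (q := q) (i := i) (j := j) hG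
  refine eq_of_sub_eq_toMvPolynomial_smul (i := i) hg hd (A_mem (T_mem (A_mem (T_mem hF))))
    (T_mem (A_mem (T_mem (A_mem hF))))
    (-topCoeffVec d i (demazureLusztig q i j (mulXModVec d g i (demazureLusztig q i j F))) +
      (X j : MvPolynomial σ R) • q • topCoeffVec d i F +
      (X j : MvPolynomial σ R) • (q - 1) • heckeSwap q i j (topCoeffVec d j F) -
      g.toMvPolynomial j •
        demazureLusztig q i j (heckeSwap q i j (topCoeffVec d j (topCoeffVec d i F)))) ?_
  rw [demazureLusztig_mulXModVec_demazureLusztig hij (A_mem hF),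
    heckeSwap_topCoeffVec_mulXModVec hij, smul_sub, map_sub,
    smul_comm _ (X j : MvPolynomial σ R) (heckeSwap q i j _), demazureLusztig_X_smul_right hij,
    demazureLusztig_toMvPolynomial_smul_toMvPolynomial_smul,
    mulXModVec_eq (demazureLusztig q i j _), mulXModVec_eq F]
  conv_lhs => enter [1, 1]; rw [demazureLusztig_mulXModVec_demazureLusztig hij hF]
  module

end TruncatedModule

section Inversions

variable {σ : Type*} [LinearOrder σ] {i j : σ}

lemma swap_lt_swap (hij : i ⋖ j) {a b : σ} (hab : a < b) (hne : ¬(a = i ∧ b = j)) :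
    Equiv.swap i j a < Equiv.swap i j b := by
  have := hij.lt
  have ge_of_gt : i < b → j ≤ b := hij.ge_of_gt
  have le_of_lt : a < j → a ≤ i := hij.le_of_lt
  grind

lemma swap_mul_symm_lt_iff {w : Equiv.Perm σ} :
    (Equiv.swap i j * w).symm i < (Equiv.swap i j * w).symm j ↔ w.symm j < w.symm i := by
  rw [swap_mul_symm_apply, swap_mul_symm_apply, Equiv.swap_apply_left, Equiv.swap_apply_right]

lemma exists_covBy_symm_lt_of_ne_one [Finite σ] {w : Equiv.Perm σ} (hw : w ≠ 1) :
    ∃ i j, i ⋖ j ∧ w.symm j < w.symm i := by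
  have := Fintype.ofFinite σ
  have := Fintype.toLocallyFiniteOrder (α := σ)
  contrapose! hw
  have strictMono : StrictMono w.symm := strictMono_iff_forall_covBy _ |>.2 fun i j hij =>
    (hw i j hij).lt_of_ne (w.symm.injective.ne hij.ne)
  have orderIso_eq : strictMono.orderIsoOfSurjective _ w.symm.surjective = OrderIso.refl σ :=
    Subsingleton.elim _ _
  exact inv_eq_one.1 (Equiv.ext fun x => DFunLike.congr_fun orderIso_eq x)

section Fintype

variable [Fintype σ]

/-- The inversions of `w`, as pairs of values: their number is the length of `w`. -/
def inversions (w : Equiv.Perm σ) : Finset (σ × σ) :=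
  {p | p.1 < p.2 ∧ w.symm p.2 < w.symm p.1}

lemma mem_inversions {w : Equiv.Perm σ} {p : σ × σ} :
    p ∈ inversions w ↔ p.1 < p.2 ∧ w.symm p.2 < w.symm p.1 := by
  rw [inversions, Finset.mem_filter_univ]

lemma inversions_one : inversions (1 : Equiv.Perm σ) = ∅ :=
  Finset.eq_empty_of_forall_notMem fun _ hp =>
    (mem_inversions.1 hp).1.asymm (mem_inversions.1 hp).2

lemma inversions_swap_mul (hij : i ⋖ j) {w : Equiv.Perm σ} (hw : w.symm i < w.symm j) :
    inversions (Equiv.swap i j * w) = insert (i, j) ((inversions w).map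
      ((Equiv.swap i j).prodCongr (Equiv.swap i j)).toEmbedding) := by
  ext ⟨a, b⟩
  rw [Finset.mem_insert, Finset.mem_map_equiv, mem_inversions, mem_inversions, Prod.mk.injEq]
  simp only [swap_mul_symm_apply, Equiv.prodCongr_symm, Equiv.prodCongr_apply, Equiv.symm_swap,
    Prod.map]
  constructor
  · rintro ⟨hab, hw'⟩
    exact or_iff_not_imp_left.2 fun hne => ⟨swap_lt_swap hij hab hne, hw'⟩
  · rintro (⟨rfl, rfl⟩ | ⟨hab, hw'⟩)
    · rw [Equiv.swap_apply_left, Equiv.swap_apply_right]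
      exact ⟨hij.lt, hw⟩
    · refine ⟨?_, hw'⟩
      have hne : ¬(Equiv.swap i j a = i ∧ Equiv.swap i j b = j) := by
        rintro ⟨ha, hb⟩
        rw [ha, hb] at hw'
        exact hw.asymm hw'
      simpa only [Equiv.swap_apply_self] using swap_lt_swap hij hab hne

lemma card_inversions_swap_mul (hij : i ⋖ j) {w : Equiv.Perm σ} (hw : w.symm i < w.symm j) :
    (inversions (Equiv.swap i j * w)).card = (inversions w).card + 1 := by
  rw [inversions_swap_mul hij hw, Finset.card_insert_of_notMem, Finset.card_map]
  rw [Finset.mem_map_equiv, mem_inversions]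
  simp only [Equiv.prodCongr_symm, Equiv.prodCongr_apply, Equiv.symm_swap, Prod.map,
    Equiv.swap_apply_left, Equiv.swap_apply_right, hij.lt.not_gt, false_and, not_false_eq_true]

lemma card_inversions_swap_mul_add_one (hij : i ⋖ j) {w : Equiv.Perm σ}
    (hw : w.symm j < w.symm i) :
    (inversions (Equiv.swap i j * w)).card + 1 = (inversions w).card := by
  rw [← card_inversions_swap_mul hij (swap_mul_symm_lt_iff.2 hw), Equiv.swap_mul_self_mul]

end Fintype

@[elab_as_elim]
lemma ascent_induction [Finite σ] {P : Equiv.Perm σ → Prop} (one : P 1)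
    (swap_mul : ∀ i j w, i ⋖ j → w.symm i < w.symm j → P w → P (Equiv.swap i j * w))
    (w : Equiv.Perm σ) : P w := by
  have := Fintype.ofFinite σ
  induction hr : (inversions w).card using Nat.strong_induction_on generalizing w with
  | _ r ih =>
    by_cases hw : w = 1
    · exact hw ▸ one
    obtain ⟨i, j, hij, hdesc⟩ := exists_covBy_symm_lt_of_ne_one hw
    rw [← Equiv.swap_mul_self_mul i j w]
    have card_lt := card_inversions_swap_mul_add_one hij hdesc
    exact swap_mul i j _ hij (swap_mul_symm_lt_iff.2 hdesc) (ih _ (by omega) _ rfl)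

end Inversions

section ReducedWords

variable {k m n v q} {i j : Fin n}

lemma val_add_one_of_covBy (hij : i ⋖ j) : i.1 + 1 = j.1 :=
  Nat.covBy_iff_add_one_eq.1 (Fin.covBy_iff.1 hij)

variable [NeZero n]

lemma natCast_covBy_natCast {t : ℕ} (ht : t + 1 < n) :
    (t : Fin n) ⋖ ((t + 1 : ℕ) : Fin n) := by
  rw [Fin.covBy_iff, Nat.covBy_iff_add_one_eq, Fin.val_cast_of_lt ht,
    Fin.val_cast_of_lt (by omega)]

lemma swapProd_nil : swapProd n [] = 1 :=
  rfl

lemma swapProd_cons (t : ℕ) (l : List ℕ) : swapProd n (t :: l) =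
    Equiv.swap (t : Fin n) ((t + 1 : ℕ) : Fin n) * swapProd n l := by
  simp [swapProd]

lemma swapProd_cons_of_covBy (hij : i ⋖ j) (l : List ℕ) :
    swapProd n (i.1 :: l) = Equiv.swap i j * swapProd n l := by
  rw [swapProd_cons, val_add_one_of_covBy hij, Fin.cast_val_eq_self, Fin.cast_val_eq_self]

lemma card_inversions_swapProd_le {l : List ℕ} (hl : ∀ t ∈ l, t + 1 < n) :
    (inversions (swapProd n l)).card ≤ l.length := by
  induction l with
  | nil => rw [swapProd_nil, inversions_one, Finset.card_empty, List.length_nil]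
  | cons t l ih =>
    obtain ⟨ht, hl⟩ := List.forall_mem_cons.1 hl
    have hcov := natCast_covBy_natCast ht
    have card_le := ih hl
    rw [swapProd_cons, List.length_cons]
    rcases lt_or_gt_of_ne ((swapProd n l).symm.injective.ne hcov.ne) with h | h
    · have card_eq := card_inversions_swap_mul hcov h
      omega
    · have card_eq := card_inversions_swap_mul_add_one hcov h
      omega

lemma exists_word_length_eq (w : Equiv.Perm (Fin n)) : ∃ l : List ℕ,
    (∀ t ∈ l, t + 1 < n) ∧ swapProd n l = w ∧ l.length = (inversions w).card := by
  induction w using ascent_induction with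
  | one => exact ⟨[], by simp, swapProd_nil, by rw [inversions_one]; rfl⟩
  | swap_mul i j w hij hw ih =>
    obtain ⟨l, hl, rfl, hlen⟩ := ih
    refine ⟨i.1 :: l, List.forall_mem_cons.2 ⟨?_, hl⟩, swapProd_cons_of_covBy hij l, ?_⟩
    · exact val_add_one_of_covBy hij ▸ j.2
    · rw [List.length_cons, hlen, card_inversions_swap_mul hij hw]

lemma isReducedWord_of_length_eq {l : List ℕ} {w : Equiv.Perm (Fin n)}
    (hl : ∀ t ∈ l, t + 1 < n) (hw : swapProd n l = w) (hlen : l.length = (inversions w).card) :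
    IsReducedWord n l w := by
  refine ⟨hl, hw, fun l' hl' hw' => ?_⟩
  rw [hlen, ← hw']
  exact card_inversions_swapProd_le hl'

variable {aw : Equiv.Perm (Fin n) → CH k m n v q}

lemma aw_one (haw : IsAW k m n v q aw) : aw 1 = 1 :=
  haw 1 [] (isReducedWord_of_length_eq (by simp) swapProd_nil (by rw [inversions_one]; rfl))

lemma aw_swap_mul (haw : IsAW k m n v q aw) (hij : i ⋖ j) {w : Equiv.Perm (Fin n)}
    (hw : w.symm i < w.symm j) : aw (Equiv.swap i j * w) = gen k m n v q j.1 * aw w := by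
  obtain ⟨l, hl, hlw, hlen⟩ := exists_word_length_eq w
  have reduced : IsReducedWord n (i.1 :: l) (Equiv.swap i j * w) := by
    refine isReducedWord_of_length_eq (List.forall_mem_cons.2 ⟨?_, hl⟩) ?_ ?_
    · exact val_add_one_of_covBy hij ▸ j.2
    · rw [swapProd_cons_of_covBy hij, hlw]
    · rw [List.length_cons, hlen, card_inversions_swap_mul hij hw]
  rw [haw _ _ reduced, haw w l (isReducedWord_of_length_eq hl hlw hlen), genProd, List.map_cons,
    List.prod_cons, val_add_one_of_covBy hij, genProd]

end ReducedWords

section Representation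

variable {k m n v q}

/-- The polynomial `(x - v_1) ⋯ (x - v_m)` of which the first generator is a root. -/
def cyclotomicPoly (v : Fin m → k) : Polynomial k :=
  ∏ j, (Polynomial.X - Polynomial.C (v j))

lemma monic_cyclotomicPoly (v : Fin m → k) : (cyclotomicPoly v).Monic :=
  Polynomial.monic_prod_X_sub_C _ _

lemma natDegree_cyclotomicPoly [NeZero m] (v : Fin m → k) :
    (cyclotomicPoly v).natDegree = m - 1 + 1 := by
  rw [cyclotomicPoly, Polynomial.natDegree_finsetProd_X_sub_C_eq_card, Finset.card_univ,
    Fintype.card_fin, Nat.sub_add_cancel NeZero.one_le]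

lemma aeval_cyclotomicPoly {A : Type*} [Ring A] [Algebra k A] (x : A) :
    Polynomial.aeval x (cyclotomicPoly v) =
      (List.ofFn fun j => x - algebraMap k A (v j)).prod := by
  rw [cyclotomicPoly, ← List.prod_ofFn, map_list_prod, List.map_ofFn]
  simp only [Function.comp_def, map_sub, Polynomial.aeval_X, Polynomial.aeval_C]

/-- The index preceding `i`; junk value `0` at `i = 0`. -/
def precedingIndex (i : Fin n) : Fin n :=
  ⟨i - 1, (Nat.sub_le _ _).trans_lt i.2⟩

lemma precedingIndex_eq {i j : Fin n} (h : j.1 = i.1 + 1) : precedingIndex j = i :=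
  Fin.ext (Nat.sub_eq_of_eq_add h)

lemma precedingIndex_ne {i : Fin n} (hi : i.1 ≠ 0) : precedingIndex i ≠ i :=
  Fin.ne_of_val_ne (Nat.sub_one_lt hi).ne

variable [NeZero m]

variable (v q) in
/-- The operator by which the generator `i` of the cyclotomic Hecke algebra acts on the truncated
module: multiplication by the first variable if `i = 0`, Demazure–Lusztig operator otherwise. -/
def generatorOp (i : Fin n) : Module.End k (truncated (Fin n) k (m - 1)) :=
  if i.1 = 0 then truncatedMulX (monic_cyclotomicPoly v) (natDegree_cyclotomicPoly v) i
  else (demazureLusztig q (precedingIndex i) i).restrict fun _ => demazureLusztig_mem_truncated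

variable {i j : Fin n} (F : truncated (Fin n) k (m - 1))

lemma coe_generatorOp_of_eq_zero (hi : i.1 = 0) :
    (generatorOp v q i F : PermPolynomial (Fin n) k) =
      mulXModVec (m - 1) (cyclotomicPoly v) i F := by
  rw [generatorOp, if_pos hi, coe_truncatedMulX]

lemma coe_generatorOp_of_ne_zero (hi : i.1 ≠ 0) :
    (generatorOp v q i F : PermPolynomial (Fin n) k) =
      demazureLusztig q (precedingIndex i) i F := by
  rw [generatorOp, if_neg hi, LinearMap.coe_restrict_apply]

lemma generatorOp_cyclo (hi : i.1 = 0) :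
    (List.ofFn fun j => generatorOp v q i - algebraMap k _ (v j)).prod = 0 := by
  refine (aeval_cyclotomicPoly (generatorOp v q i)).symm.trans ?_
  rw [generatorOp, if_pos hi, aeval_truncatedMulX]

lemma generatorOp_quad (hi : i.1 ≠ 0) :
    (generatorOp v q i - algebraMap k _ q) * (generatorOp v q i + 1) = 0 := by
  refine LinearMap.ext fun F => Subtype.ext ?_
  simp only [Module.End.mul_apply, LinearMap.sub_apply, LinearMap.add_apply,
    Module.algebraMap_end_apply, Module.End.one_apply, Submodule.coe_sub, Submodule.coe_add,
    coe_generatorOp_of_ne_zero _ hi, Submodule.coe_smul, LinearMap.zero_apply, Submodule.coe_zero,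
    map_add, demazureLusztig_demazureLusztig (precedingIndex_ne hi)]
  module

lemma generatorOp_braid_zero (hi : i.1 = 0) (hj : j.1 = 1) :
    generatorOp v q i * generatorOp v q j * generatorOp v q i * generatorOp v q j =
      generatorOp v q j * generatorOp v q i * generatorOp v q j * generatorOp v q i := by
  refine LinearMap.ext fun F => Subtype.ext ?_
  have hj' : j.1 ≠ 0 := hj ▸ one_ne_zero
  simp only [Module.End.mul_apply, coe_generatorOp_of_eq_zero _ hi,
    coe_generatorOp_of_ne_zero _ hj', precedingIndex_eq (show j.1 = i.1 + 1 by rw [hi, hj])]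
  exact mulXModVec_demazureLusztig_braid (monic_cyclotomicPoly v) (natDegree_cyclotomicPoly v)
    (Fin.ne_of_val_ne (by omega)) F.2

lemma generatorOp_comm (hij : i.1 + 2 ≤ j.1) :
    generatorOp v q i * generatorOp v q j = generatorOp v q j * generatorOp v q i := by
  refine LinearMap.ext fun F => Subtype.ext ?_
  have hj : j.1 ≠ 0 := by omega
  have ne_preceding : i ≠ precedingIndex j :=
    Fin.ne_of_val_ne (by simp only [precedingIndex]; omega)
  have ne : i ≠ j := Fin.ne_of_val_ne (by omega)
  by_cases hi : i.1 = 0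
  · simp only [Module.End.mul_apply, coe_generatorOp_of_eq_zero _ hi,
      coe_generatorOp_of_ne_zero _ hj]
    exact mulXModVec_demazureLusztig_comm (monic_cyclotomicPoly v) (natDegree_cyclotomicPoly v)
      ne_preceding ne F.2
  · simp only [Module.End.mul_apply, coe_generatorOp_of_ne_zero _ hi,
      coe_generatorOp_of_ne_zero _ hj]
    exact demazureLusztig_comm (precedingIndex_ne hi) (precedingIndex_ne hj)
      (Fin.ne_of_val_ne (by simp only [precedingIndex]; omega)) ne_preceding.symm
      (Fin.ne_of_val_ne (by simp only [precedingIndex]; omega)) ne.symm _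

lemma generatorOp_braid (hi : i.1 ≠ 0) (hj : j.1 = i.1 + 1) :
    generatorOp v q j * generatorOp v q i * generatorOp v q j =
      generatorOp v q i * generatorOp v q j * generatorOp v q i := by
  refine LinearMap.ext fun F => Subtype.ext ?_
  have hj' : j.1 ≠ 0 := by omega
  simp only [Module.End.mul_apply, coe_generatorOp_of_ne_zero _ hi,
    coe_generatorOp_of_ne_zero _ hj', precedingIndex_eq hj]
  exact (demazureLusztig_braid (precedingIndex_ne hi) (Fin.ne_of_val_ne (by omega))
    (Fin.ne_of_val_ne (by simp only [precedingIndex]; omega)) _).symm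

lemma lift_generatorOp_eq_of_rel ⦃x y : FreeAlgebra k (Fin n)⦄ (h : Rel k m n v q x y) :
    FreeAlgebra.lift k (generatorOp v q) x = FreeAlgebra.lift k (generatorOp v q) y := by
  cases h with
  | cyclo i hi =>
    rw [map_list_prod, List.map_ofFn, map_zero, ← generatorOp_cyclo (v := v) (q := q) hi]
    simp only [Function.comp_def, map_sub, FreeAlgebra.lift_ι_apply, AlgHom.commutes]
  | quad i hi =>
    simpa only [map_mul, map_sub, map_add, map_one, map_zero, AlgHom.commutes,
      FreeAlgebra.lift_ι_apply] using generatorOp_quad (Nat.one_le_iff_ne_zero.1 hi)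
  | braid0 i j hi hj =>
    simpa only [map_mul, FreeAlgebra.lift_ι_apply] using generatorOp_braid_zero hi hj
  | comm i j hij =>
    simpa only [map_mul, FreeAlgebra.lift_ι_apply] using generatorOp_comm hij
  | braid i j hi hj =>
    simpa only [map_mul, FreeAlgebra.lift_ι_apply] using
      generatorOp_braid (Nat.one_le_iff_ne_zero.1 hi) hj

variable (k m n v q) in
/-- The representation of the cyclotomic Hecke algebra on the truncated module. -/
def polyRep : CH k m n v q →ₐ[k] Module.End k (truncated (Fin n) k (m - 1)) :=
  RingQuot.liftAlgHom k ⟨FreeAlgebra.lift k (generatorOp v q), lift_generatorOp_eq_of_rel⟩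

variable [NeZero n]

lemma polyRep_gen (i : Fin n) : polyRep k m n v q (gen k m n v q i.1) = generatorOp v q i := by
  rw [polyRep, gen, Fin.cast_val_eq_self, ← FreeAlgebra.lift_ι_apply (R := k) (generatorOp v q) i]
  exact RingQuot.liftAlgHom_mkAlgHom_apply k _ _ _

lemma polyRep_gen_zero_apply :
    (polyRep k m n v q (gen k m n v q 0) F : PermPolynomial (Fin n) k) =
      mulXModVec (m - 1) (cyclotomicPoly v) 0 F := by
  rw [← Fin.val_zero n, polyRep_gen, coe_generatorOp_of_eq_zero _ (Fin.val_zero n)]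

lemma polyRep_gen_apply_of_covBy (hij : i ⋖ j) :
    (polyRep k m n v q (gen k m n v q j.1) F : PermPolynomial (Fin n) k) =
      demazureLusztig q i j F := by
  have val_eq := val_add_one_of_covBy hij
  rw [polyRep_gen, coe_generatorOp_of_ne_zero _ (by omega), precedingIndex_eq val_eq.symm]

end Representation

section Relations

variable {k m n v q}

variable (k m n v q) in
/-- The quotient map from the free algebra on the generators. -/
def freeAlgebraToCH : FreeAlgebra k (Fin n) →ₐ[k] CH k m n v q :=
  RingQuot.mkAlgHom k (Rel k m n v q)

lemma freeAlgebraToCH_surjective : Function.Surjective (freeAlgebraToCH k m n v q) :=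
  RingQuot.mkAlgHom_surjective k _

lemma freeAlgebraToCH_eq_of_rel {x y : FreeAlgebra k (Fin n)} (h : Rel k m n v q x y) :
    freeAlgebraToCH k m n v q x = freeAlgebraToCH k m n v q y :=
  RingQuot.mkAlgHom_rel k h

variable [NeZero n]

lemma freeAlgebraToCH_ι_natCast (t : ℕ) :
    freeAlgebraToCH k m n v q (FreeAlgebra.ι k (t : Fin n)) = gen k m n v q t :=
  rfl

lemma adjoin_range_gen :
    Algebra.adjoin k (Set.range fun i : Fin n => gen k m n v q i.1) = ⊤ := by
  have gen_eq : (fun i : Fin n => gen k m n v q i.1) =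
      freeAlgebraToCH k m n v q ∘ FreeAlgebra.ι k := by
    funext i
    rw [← freeAlgebraToCH_ι_natCast, Fin.cast_val_eq_self, Function.comp_apply]
  rw [gen_eq, Set.range_comp, ← AlgHom.map_adjoin, FreeAlgebra.adjoin_range_ι, Algebra.map_top,
    (AlgHom.range_eq_top _).2 freeAlgebraToCH_surjective]

lemma aeval_gen_zero_cyclotomicPoly :
    Polynomial.aeval (gen k m n v q 0) (cyclotomicPoly v) = 0 := by
  have rel := freeAlgebraToCH_eq_of_rel (Rel.cyclo (k := k) (v := v) (q := q) ((0 : ℕ) : Fin n)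
    (Fin.val_cast_of_lt (Nat.pos_of_neZero n)))
  rwa [← aeval_cyclotomicPoly, ← Polynomial.aeval_algHom_apply, freeAlgebraToCH_ι_natCast,
    map_zero] at rel

lemma gen_mul_gen {t : ℕ} (ht : t ≠ 0) (htn : t < n) :
    gen k m n v q t * gen k m n v q t = (q - 1) • gen k m n v q t + q • (1 : CH k m n v q) := by
  have rel := freeAlgebraToCH_eq_of_rel (Rel.quad (k := k) (v := v) (q := q) (t : Fin n)
    (by rw [Fin.val_cast_of_lt htn]; omega))
  rw [map_mul, map_sub, map_add, map_one, map_zero, AlgHom.commutes, freeAlgebraToCH_ι_natCast,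
    Algebra.algebraMap_eq_smul_one, sub_mul, mul_add, mul_one, smul_mul_assoc, one_mul,
    smul_add, sub_eq_zero] at rel
  rw [sub_smul, one_smul, sub_add_eq_add_sub, ← rel, add_sub_cancel_right]

lemma gen_braid_zero (h : 1 < n) :
    gen k m n v q 0 * gen k m n v q 1 * gen k m n v q 0 * gen k m n v q 1 =
      gen k m n v q 1 * gen k m n v q 0 * gen k m n v q 1 * gen k m n v q 0 := by
  have rel := freeAlgebraToCH_eq_of_rel (Rel.braid0 (k := k) (v := v) (q := q) ((0 : ℕ) : Fin n)
    ((1 : ℕ) : Fin n) (Fin.val_cast_of_lt (by omega)) (Fin.val_cast_of_lt h))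
  simpa only [map_mul, freeAlgebraToCH_ι_natCast] using rel

lemma commute_gen_gen {s t : ℕ} (hst : s + 2 ≤ t) (ht : t < n) :
    Commute (gen k m n v q s) (gen k m n v q t) := by
  have rel := freeAlgebraToCH_eq_of_rel (Rel.comm (k := k) (v := v) (q := q) (s : Fin n) (t : Fin n)
    (by rwa [Fin.val_cast_of_lt ht, Fin.val_cast_of_lt (by omega)]))
  rwa [map_mul, map_mul] at rel

lemma gen_braid {t : ℕ} (ht : t ≠ 0) (htn : t + 1 < n) :
    gen k m n v q (t + 1) * gen k m n v q t * gen k m n v q (t + 1) =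
      gen k m n v q t * gen k m n v q (t + 1) * gen k m n v q t := by
  have rel := freeAlgebraToCH_eq_of_rel (Rel.braid (k := k) (v := v) (q := q) (t : Fin n)
    ((t + 1 : ℕ) : Fin n) (by rw [Fin.val_cast_of_lt (by omega)]; omega)
    (by rw [Fin.val_cast_of_lt htn, Fin.val_cast_of_lt (by omega)]))
  simpa only [map_mul, freeAlgebraToCH_ι_natCast] using rel

lemma murphyAux_succ (t : ℕ) : murphyAux k m n v q (t + 1) =
    q⁻¹ • (gen k m n v q (t + 1) * murphyAux k m n v q t * gen k m n v q (t + 1)) :=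
  rfl

lemma commute_murphyAux_succ {x : CH k m n v q} {t : ℕ}
    (hgen : Commute x (gen k m n v q (t + 1))) (hmurphy : Commute x (murphyAux k m n v q t)) :
    Commute x (murphyAux k m n v q (t + 1)) :=
  ((hgen.mul_right hmurphy).mul_right hgen).smul_right _

lemma commute_gen_murphyAux_of_add_two_le {s t : ℕ} (hts : t + 2 ≤ s) (hs : s < n) :
    Commute (gen k m n v q s) (murphyAux k m n v q t) := by
  induction t with
  | zero => exact (commute_gen_gen hts hs).symm
  | succ t ih => exact commute_murphyAux_succ (commute_gen_gen hts hs).symm (ih (by omega))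

lemma commute_gen_murphyAux_succ {t : ℕ} (ht : t + 2 < n) :
    Commute (gen k m n v q (t + 1)) (murphyAux k m n v q (t + 2)) := by
  have braid := gen_braid (k := k) (m := m) (v := v) (q := q) t.succ_ne_zero ht
  have comm := (commute_gen_murphyAux_of_add_two_le (k := k) (m := m) (v := v) (q := q)
    (le_refl (t + 2)) ht).eq
  rw [murphyAux_succ, murphyAux_succ, mul_smul_comm, smul_mul_assoc]
  refine (Commute.smul_right ?_ _).smul_right _
  generalize gen k m n v q (t + 1 + 1) = b, gen k m n v q (t + 1) = a, murphyAux k m n v q t = l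
    at braid comm ⊢
  calc a * (b * (a * l * a) * b) = a * b * a * l * a * b := by simp only [mul_assoc]
    _ = b * a * (b * l) * a * b := by rw [← braid]; simp only [mul_assoc]
    _ = b * a * l * (b * a * b) := by rw [comm]; simp only [mul_assoc]
    _ = b * (a * l * a) * b * a := by rw [braid]; simp only [mul_assoc]

lemma commute_gen_murphyAux_of_lt {s t : ℕ} (hst : s < t) (ht : t < n) :
    Commute (gen k m n v q s) (murphyAux k m n v q t) := by
  induction t, hst using Nat.le_induction with
  | base =>
    cases s with
    | zero =>
      refine Commute.smul_right ?_ _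
      simpa only [Commute, SemiconjBy, murphyAux, mul_assoc] using gen_braid_zero ht
    | succ s => exact commute_gen_murphyAux_succ ht
  | succ t hst ih =>
    exact commute_murphyAux_succ (commute_gen_gen (Nat.succ_le_succ hst) ht) (ih (by omega))

lemma commute_murphyAux_of_lt {s t : ℕ} (hst : s < t) (ht : t < n) :
    Commute (murphyAux k m n v q s) (murphyAux k m n v q t) := by
  induction s with
  | zero => exact commute_gen_murphyAux_of_lt hst ht
  | succ s ih =>
    exact (commute_murphyAux_succ (commute_gen_murphyAux_of_lt hst ht).symm
      (ih (by omega)).symm).symm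

lemma commute_murphy (i j : Fin n) : Commute (murphy k m n v q i) (murphy k m n v q j) := by
  rcases lt_trichotomy i j with h | rfl | h
  · exact commute_murphyAux_of_lt h j.2
  · rfl
  · exact (commute_murphyAux_of_lt h i.2).symm

variable {i j : Fin n}

lemma commute_gen_murphy {a : Fin n} (hij : i ⋖ j) (hi : a ≠ i) (hj : a ≠ j) :
    Commute (gen k m n v q j.1) (murphy k m n v q a) := by
  have val_eq := val_add_one_of_covBy hij
  rw [Ne, Fin.ext_iff] at hi hj
  rcases Nat.lt_or_ge j.1 a.1 with h | h
  · exact commute_gen_murphyAux_of_lt h a.2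
  · exact commute_gen_murphyAux_of_add_two_le (by omega) j.2

lemma murphy_of_covBy (hij : i ⋖ j) : murphy k m n v q j =
    q⁻¹ • (gen k m n v q j.1 * murphy k m n v q i * gen k m n v q j.1) := by
  rw [murphy, ← val_add_one_of_covBy hij, murphyAux_succ, murphy]

lemma gen_mul_murphy_left (hq : q ≠ 0) (hij : i ⋖ j) :
    gen k m n v q j.1 * murphy k m n v q i =
      murphy k m n v q j * gen k m n v q j.1 - (q - 1) • murphy k m n v q j := by
  rw [murphy_of_covBy hij, smul_mul_assoc, mul_assoc (_ * _),
    gen_mul_gen (Nat.ne_zero_of_lt hij.lt) j.2, mul_add, mul_smul_comm, mul_smul_comm, mul_one,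
    smul_add, inv_smul_smul₀ hq, smul_comm, add_sub_cancel_left]

lemma gen_mul_murphy_right (hq : q ≠ 0) (hij : i ⋖ j) :
    gen k m n v q j.1 * murphy k m n v q j =
      murphy k m n v q i * gen k m n v q j.1 + (q - 1) • murphy k m n v q j := by
  rw [murphy_of_covBy hij, mul_smul_comm, ← mul_assoc, ← mul_assoc,
    gen_mul_gen (Nat.ne_zero_of_lt hij.lt) j.2, add_mul, add_mul, smul_mul_assoc, smul_mul_assoc,
    smul_mul_assoc, smul_mul_assoc, one_mul, smul_add, inv_smul_smul₀ hq, smul_comm, add_comm]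

end Relations

section TruncatedMonomials

open MvPolynomial

variable {σ R : Type*} [CommRing R]

lemma mem_restrictDegree_of_X_mul_mem {d : ℕ} {i : σ} {f : MvPolynomial σ R}
    (hf : X i * f ∈ restrictDegree σ R d) : f ∈ restrictDegree σ R d := by
  rw [mem_restrictDegree] at hf ⊢
  intro s hs a
  refine le_trans ?_ (hf (Finsupp.single i 1 + s) ?_ a)
  · rw [Finsupp.add_apply]
    exact Nat.le_add_left _ _
  · rwa [mem_support_iff, coeff_X_mul, ← mem_support_iff]

lemma topCoeff_eq_zero_of_X_mul_mem {d : ℕ} {i : σ} {f : MvPolynomial σ R}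
    (hf : X i * f ∈ restrictDegree σ R d) : topCoeff d i f = 0 := by
  ext s
  rw [coeff_topCoeff, coeff_zero]
  by_contra hs
  rw [← coeff_X_mul _ i] at hs
  have exponent_le := (mem_restrictDegree _ _ _).1 hf _ (mem_support_iff.2 hs) i
  simp only [Finsupp.add_apply, Finsupp.single_eq_same] at exponent_le
  lia

lemma smul_permVec_mem_truncated {d : ℕ} {f : MvPolynomial σ R} (hf : f ∈ restrictDegree σ R d)
    (w : Equiv.Perm σ) : f • permVec w ∈ truncated σ R d := by
  refine mem_truncated.2 fun u => ?_
  rw [Pi.smul_apply, permVec_apply, smul_eq_mul, mul_ite, mul_one, mul_zero]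
  split_ifs
  exacts [hf, zero_mem _]

lemma permVec_mem_truncated {d : ℕ} (w : Equiv.Perm σ) : permVec w ∈ truncated σ R d := by
  rw [← one_smul (MvPolynomial σ R) (permVec w)]
  exact smul_permVec_mem_truncated
    (mem_restrictDegree_iff_degreeOf_le.2 fun i => (degreeOf_one i).trans_le d.zero_le) w

variable [Finite σ] {m : ℕ}

/-- The vector `X ^ e ⊗ w` of `P ⊗ R[S]`, with all exponents less than `m`. -/
def truncatedMonomial (R : Type*) [CommRing R] (p : (σ → Fin m) × Equiv.Perm σ) :
    PermPolynomial σ R :=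
  monomial (Finsupp.equivFunOnFinite.symm fun i => (p.1 i).1) (1 : R) • permVec p.2

lemma truncatedMonomial_eq_basis [Fintype (Equiv.Perm σ)] (p : (σ → Fin m) × Equiv.Perm σ) :
    truncatedMonomial R p = Pi.basis (fun _ : Equiv.Perm σ => basisMonomials σ R)
      ⟨p.2, Finsupp.equivFunOnFinite.symm fun i => (p.1 i).1⟩ := by
  rw [Pi.basis_apply, coe_basisMonomials, truncatedMonomial, permVec, ← Pi.single_smul, smul_eq_mul,
    mul_one]

lemma linearIndependent_truncatedMonomial :
    LinearIndependent R (truncatedMonomial R : (σ → Fin m) × Equiv.Perm σ → _) := by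
  have index_injective : Function.Injective fun p : (σ → Fin m) × Equiv.Perm σ =>
      (⟨p.2, Finsupp.equivFunOnFinite.symm fun i => (p.1 i).1⟩ :
        Σ _ : Equiv.Perm σ, σ →₀ ℕ) := by
    rintro ⟨e, w⟩ ⟨e', w'⟩ h
    obtain ⟨rfl, he⟩ := Sigma.mk.inj h
    have exponent_eq := Finsupp.equivFunOnFinite.symm.injective (eq_of_heq he)
    exact Prod.ext (funext fun i => Fin.ext (congrFun exponent_eq i)) rfl
  have := Fintype.ofFinite (Equiv.Perm σ)
  rw [funext (truncatedMonomial_eq_basis (R := R))]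
  exact (Module.Basis.linearIndependent _).comp _ index_injective

lemma truncated_le_span_truncatedMonomial [NeZero m] :
    truncated σ R (m - 1) ≤ Submodule.span R
      (Set.range (truncatedMonomial R : (σ → Fin m) × Equiv.Perm σ → _)) := by
  have := Fintype.ofFinite (Equiv.Perm σ)
  intro F hF
  rw [← sum_smul_permVec F]
  refine Submodule.sum_mem _ fun w _ => ?_
  rw [(F w).as_sum, Finset.sum_smul]
  refine Submodule.sum_mem _ fun s hs => ?_
  have exponent_lt (i : σ) : s i < m :=
    Nat.lt_of_le_pred (Nat.pos_of_neZero m)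
      ((mem_restrictDegree _ _ _).1 (mem_truncated.1 hF w) s hs i)
  rw [← mul_one (coeff s (F w)), ← smul_eq_mul, ← smul_monomial, smul_assoc]
  exact Submodule.smul_mem _ _
    (Submodule.subset_span ⟨(fun i => ⟨s i, exponent_lt i⟩, w), by simp [truncatedMonomial]⟩)

end TruncatedMonomials

section CommutingEvaluation

open MvPolynomial
open scoped IsMulCommutative

variable {σ R A : Type*} [CommRing R] [Ring A] [Algebra R A] {x : σ → A}

lemma isMulCommutative_adjoin_range (hx : ∀ i j, Commute (x i) (x j)) :
    IsMulCommutative (Algebra.adjoin R (Set.range x)) :=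
  Algebra.isMulCommutative_adjoin R (Set.forall_mem_range.2 fun i =>
    Set.forall_mem_range.2 fun j => (hx i j).eq)

/-- Evaluation of polynomials at commuting elements of a noncommutative algebra. -/
def aevalOfCommute (hx : ∀ i j, Commute (x i) (x j)) : MvPolynomial σ R →ₐ[R] A :=
  have := isMulCommutative_adjoin_range (R := R) hx
  (Algebra.adjoin R (Set.range x)).val.comp
    (aeval fun i => (⟨x i, Algebra.subset_adjoin ⟨i, rfl⟩⟩ : Algebra.adjoin R (Set.range x)))

lemma aevalOfCommute_X (hx : ∀ i j, Commute (x i) (x j)) (i : σ) :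
    aevalOfCommute (R := R) hx (X i) = x i := by
  have := isMulCommutative_adjoin_range (R := R) hx
  rw [aevalOfCommute, AlgHom.comp_apply, aeval_X, Subalgebra.coe_val]

lemma aevalOfCommute_toMvPolynomial (hx : ∀ i j, Commute (x i) (x j)) (i : σ)
    (g : Polynomial R) : aevalOfCommute hx (g.toMvPolynomial i) = Polynomial.aeval (x i) g := by
  rw [Polynomial.toMvPolynomial, ← Polynomial.aeval_algHom_apply, aevalOfCommute_X]

lemma aevalOfCommute_monomial_one {n : ℕ} {x : Fin n → A} (hx : ∀ i j, Commute (x i) (x j))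
    (s : Fin n →₀ ℕ) : aevalOfCommute (R := R) hx (monomial s 1) =
      (List.ofFn fun i => x i ^ s i).prod := by
  rw [monomial_eq, C_1, one_mul, Finsupp.prod_fintype _ _ fun _ => pow_zero _, ← List.prod_ofFn,
    map_list_prod, List.map_ofFn]
  simp only [Function.comp_def, map_pow, aevalOfCommute_X]

end CommutingEvaluation

section MurphyAction

open MvPolynomial

variable {k m n v q} [NeZero n]

variable (k m n v q) in
/-- Evaluation of polynomials at the Murphy elements. -/
def murphyEval : MvPolynomial (Fin n) k →ₐ[k] CH k m n v q :=
  aevalOfCommute commute_murphy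

lemma murphyEval_X (i : Fin n) : murphyEval k m n v q (X i) = murphy k m n v q i :=
  aevalOfCommute_X _ i

lemma murphyEval_monomial (e : Fin n → Fin m) :
    murphyEval k m n v q (monomial (Finsupp.equivFunOnFinite.symm fun i => (e i).1) 1) =
      (List.ofFn fun i => murphy k m n v q i ^ (e i).1).prod := by
  rw [murphyEval, aevalOfCommute_monomial_one]
  rfl

variable [NeZero m]

lemma polyRep_murphy_apply (hq : q ≠ 0) (i : Fin n) (F : truncated (Fin n) k (m - 1))
    (hF : topCoeffVec (m - 1) i (F : PermPolynomial (Fin n) k) = 0) :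
    (polyRep k m n v q (murphy k m n v q i) F : PermPolynomial (Fin n) k) =
      (X i : MvPolynomial (Fin n) k) • (F : PermPolynomial (Fin n) k) := by
  obtain ⟨t, ht⟩ := i
  induction t generalizing F with
  | zero =>
    have gen_apply := polyRep_gen_zero_apply (v := v) (q := q) F
    rwa [mulXModVec_eq, show (0 : Fin n) = ⟨0, ht⟩ from rfl, hF, smul_zero, sub_zero] at gen_apply
  | succ t ih =>
    have covBy : (⟨t, by omega⟩ : Fin n) ⋖ ⟨t + 1, ht⟩ := by simp [Fin.covBy_iff]
    rw [murphy_of_covBy covBy, map_smul, map_mul, map_mul, LinearMap.smul_apply,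
      Module.End.mul_apply, Module.End.mul_apply, Submodule.coe_smul,
      polyRep_gen_apply_of_covBy _ covBy, ih, polyRep_gen_apply_of_covBy _ covBy,
      demazureLusztig_X_smul_demazureLusztig covBy.lt.ne, smul_comm _ q, inv_smul_smul₀ hq]
    rw [polyRep_gen_apply_of_covBy _ covBy, topCoeffVec_demazureLusztig F.2, hF, map_zero]

lemma polyRep_murphyEval_monomial_apply (hq : q ≠ 0) (s : Fin n →₀ ℕ) (c : k)
    (hs : monomial s c ∈ restrictDegree (Fin n) k (m - 1))
    (w : Equiv.Perm (Fin n)) :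
    (polyRep k m n v q (murphyEval k m n v q (monomial s c))
        ⟨permVec w, permVec_mem_truncated w⟩ : PermPolynomial (Fin n) k) =
      monomial s c • permVec w := by
  revert hs
  refine induction_on_monomial (motive := fun p => p ∈ restrictDegree (Fin n) k (m - 1) →
    (polyRep k m n v q (murphyEval k m n v q p) ⟨permVec w, permVec_mem_truncated w⟩ :
      PermPolynomial (Fin n) k) = p • permVec w) (fun c _ => ?_) (fun p i ih hp => ?_) s c
  · rw [← algebraMap_eq, AlgHom.commutes, AlgHom.commutes, Module.algebraMap_end_apply,
      Submodule.coe_smul, algebraMap_smul]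
  · rw [mul_comm] at hp ⊢
    have p_apply := ih (mem_restrictDegree_of_X_mul_mem hp)
    rw [map_mul, map_mul, murphyEval_X, Module.End.mul_apply, polyRep_murphy_apply hq, p_apply,
      mul_smul]
    rw [p_apply]
    funext u
    rw [topCoeffVec_apply, Pi.smul_apply, permVec_apply, smul_eq_mul, mul_ite, mul_one, mul_zero]
    split_ifs
    exacts [topCoeff_eq_zero_of_X_mul_mem hp, map_zero _]

variable {aw : Equiv.Perm (Fin n) → CH k m n v q}

lemma polyRep_aw_apply (haw : IsAW k m n v q aw) (w : Equiv.Perm (Fin n)) :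
    (polyRep k m n v q (aw w) ⟨permVec 1, permVec_mem_truncated 1⟩ :
      PermPolynomial (Fin n) k) = permVec w := by
  induction w using ascent_induction with
  | one => rw [aw_one haw, map_one, Module.End.one_apply]
  | swap_mul i j w hij hw ih =>
    rw [aw_swap_mul haw hij hw, map_mul, Module.End.mul_apply, polyRep_gen_apply_of_covBy _ hij,
      ih, demazureLusztig_permVec_of_lt hw]

lemma polyRep_murphy_aw_apply (hq : q ≠ 0) (haw : IsAW k m n v q aw)
    (p : (Fin n → Fin m) × Equiv.Perm (Fin n)) :
    (polyRep k m n v q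
        ((List.ofFn fun i : Fin n => murphy k m n v q i ^ (p.1 i).1).prod * aw p.2)
        ⟨permVec 1, permVec_mem_truncated 1⟩ : PermPolynomial (Fin n) k) =
      truncatedMonomial k p := by
  have aw_apply : polyRep k m n v q (aw p.2) ⟨permVec 1, permVec_mem_truncated 1⟩ =
      ⟨permVec p.2, permVec_mem_truncated p.2⟩ := Subtype.ext (polyRep_aw_apply haw p.2)
  rw [← murphyEval_monomial, map_mul, Module.End.mul_apply, aw_apply]
  refine polyRep_murphyEval_monomial_apply hq _ _ ((mem_restrictDegree _ _ _).2 fun s hs a => ?_) _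
  rw [Finset.mem_singleton.1 (support_monomial_subset hs)]
  exact Nat.le_pred_of_lt (p.1 a).2

lemma linearIndependent_murphy_aw (hq : q ≠ 0) (haw : IsAW k m n v q aw) :
    LinearIndependent k (fun p : (Fin n → Fin m) × Equiv.Perm (Fin n) =>
      (List.ofFn fun i : Fin n => murphy k m n v q i ^ (p.1 i).1).prod * aw p.2) := by
  let applyOne : CH k m n v q →ₗ[k] PermPolynomial (Fin n) k :=
    (truncated (Fin n) k (m - 1)).subtype ∘ₗ
      LinearMap.applyₗ ⟨permVec 1, permVec_mem_truncated 1⟩ ∘ₗ (polyRep k m n v q).toLinearMap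
  refine LinearIndependent.of_comp applyOne ?_
  have comp_eq : (applyOne ∘ fun p : (Fin n → Fin m) × Equiv.Perm (Fin n) =>
      (List.ofFn fun i : Fin n => murphy k m n v q i ^ (p.1 i).1).prod * aw p.2) =
      truncatedMonomial k := funext (polyRep_murphy_aw_apply hq haw)
  rw [comp_eq]
  exact linearIndependent_truncatedMonomial

end MurphyAction

section Intertwiner

open MvPolynomial

variable {k m n v q} [NeZero n] {i j : Fin n} {aw : Equiv.Perm (Fin n) → CH k m n v q}

/-- The map `X ^ e ⊗ w ↦ L ^ e a_w` from `P ⊗ k[S_n]` to the cyclotomic Hecke algebra. -/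
def toHecke (aw : Equiv.Perm (Fin n) → CH k m n v q) :
    PermPolynomial (Fin n) k →ₗ[k] CH k m n v q :=
  ∑ w, LinearMap.mulRight k (aw w) ∘ₗ (murphyEval k m n v q).toLinearMap ∘ₗ LinearMap.proj w

lemma toHecke_apply (F : PermPolynomial (Fin n) k) :
    toHecke aw F = ∑ w, murphyEval k m n v q (F w) * aw w := by
  simp only [toHecke, LinearMap.sum_apply, LinearMap.comp_apply, LinearMap.proj_apply,
    AlgHom.toLinearMap_apply, LinearMap.mulRight_apply]

lemma toHecke_smul (f : MvPolynomial (Fin n) k) (F : PermPolynomial (Fin n) k) :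
    toHecke aw (f • F) = murphyEval k m n v q f * toHecke aw F := by
  simp only [toHecke_apply, Pi.smul_apply, smul_eq_mul, map_mul, mul_assoc, Finset.mul_sum]

lemma toHecke_X_smul (i : Fin n) (F : PermPolynomial (Fin n) k) :
    toHecke aw ((X i : MvPolynomial (Fin n) k) • F) = murphy k m n v q i * toHecke aw F := by
  rw [toHecke_smul, murphyEval_X]

lemma toHecke_permVec (w : Equiv.Perm (Fin n)) : toHecke aw (permVec w) = aw w := by
  simp [toHecke_apply, permVec_apply, apply_ite]

lemma toHecke_truncatedMonomial (p : (Fin n → Fin m) × Equiv.Perm (Fin n)) :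
    toHecke aw (truncatedMonomial k p) =
      (List.ofFn fun i : Fin n => murphy k m n v q i ^ (p.1 i).1).prod * aw p.2 := by
  rw [truncatedMonomial, toHecke_smul, toHecke_permVec, murphyEval_monomial]

lemma toHecke_mulXModVec (F : PermPolynomial (Fin n) k) :
    toHecke aw (mulXModVec (m - 1) (cyclotomicPoly v) 0 F) =
      gen k m n v q 0 * toHecke aw F := by
  rw [mulXModVec_eq, map_sub, toHecke_X_smul, toHecke_smul, murphyEval,
    aevalOfCommute_toMvPolynomial]
  change gen k m n v q 0 * _ - Polynomial.aeval (gen k m n v q 0) (cyclotomicPoly v) * _ = _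
  rw [aeval_gen_zero_cyclotomicPoly, zero_mul, sub_zero]

lemma toHecke_demazureLusztig_permVec (haw : IsAW k m n v q aw) (hij : i ⋖ j)
    (w : Equiv.Perm (Fin n)) :
    toHecke aw (demazureLusztig q i j (permVec w)) = gen k m n v q j.1 * aw w := by
  rcases (w.symm.injective.ne hij.lt.ne).lt_or_gt with hw | hw
  · rw [demazureLusztig_permVec_of_lt hw, toHecke_permVec, aw_swap_mul haw hij hw]
  · have aw_eq := aw_swap_mul haw hij (swap_mul_symm_lt_iff.2 hw)
    rw [Equiv.swap_mul_self_mul] at aw_eq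
    rw [demazureLusztig_permVec_of_gt hw, map_add, map_smul, map_smul, toHecke_permVec,
      toHecke_permVec, aw_eq, ← mul_assoc, gen_mul_gen (Nat.ne_zero_of_lt hij.lt) j.2, add_mul,
      smul_mul_assoc, smul_mul_assoc, one_mul, add_comm]

lemma toHecke_demazureLusztig (hq : q ≠ 0) (haw : IsAW k m n v q aw) (hij : i ⋖ j)
    (F : PermPolynomial (Fin n) k) :
    toHecke aw (demazureLusztig q i j F) = gen k m n v q j.1 * toHecke aw F := by
  suffices toHecke aw ∘ₗ demazureLusztig q i j =
      LinearMap.mulLeft k (gen k m n v q j.1) ∘ₗ toHecke aw from LinearMap.congr_fun this F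
  refine ext_of_X_smul (fun w => ?_) fun a F ih => ?_
  · simp only [LinearMap.comp_apply, LinearMap.mulLeft_apply]
    rw [toHecke_demazureLusztig_permVec haw hij, toHecke_permVec]
  simp only [LinearMap.comp_apply, LinearMap.mulLeft_apply] at ih ⊢
  rw [toHecke_X_smul, ← mul_assoc]
  rcases eq_or_ne a i with rfl | hi
  · rw [demazureLusztig_X_smul_left hij.lt.ne, toHecke_X_smul, map_sub, map_smul, ih,
      gen_mul_murphy_left hq hij, sub_mul, mul_sub, mul_assoc, mul_smul_comm, smul_mul_assoc]
  rcases eq_or_ne a j with rfl | hj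
  · rw [demazureLusztig_X_smul_right hij.lt.ne, map_add, toHecke_X_smul, toHecke_X_smul, map_smul,
      ih, gen_mul_murphy_right hq hij, add_mul, mul_assoc, mul_smul_comm, smul_mul_assoc]
  · rw [demazureLusztig_X_smul_of_ne hi hj, toHecke_X_smul, ih, (commute_gen_murphy hij hi hj).eq,
      mul_assoc]

variable [NeZero m]

lemma toHecke_polyRep_gen (hq : q ≠ 0) (haw : IsAW k m n v q aw) (j : Fin n)
    (F : truncated (Fin n) k (m - 1)) :
    toHecke aw (polyRep k m n v q (gen k m n v q j.1) F : PermPolynomial (Fin n) k) =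
      gen k m n v q j.1 * toHecke aw F := by
  obtain ⟨t, ht⟩ := j
  cases t with
  | zero => rw [polyRep_gen_zero_apply, toHecke_mulXModVec]
  | succ t =>
    have covBy : (⟨t, by omega⟩ : Fin n) ⋖ ⟨t + 1, ht⟩ := by simp [Fin.covBy_iff]
    rw [polyRep_gen_apply_of_covBy F covBy, toHecke_demazureLusztig hq haw covBy]

lemma toHecke_polyRep (hq : q ≠ 0) (haw : IsAW k m n v q aw) (h : CH k m n v q)
    (F : truncated (Fin n) k (m - 1)) :
    toHecke aw (polyRep k m n v q h F : PermPolynomial (Fin n) k) = h * toHecke aw F := by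
  have h_mem : h ∈ Algebra.adjoin k (Set.range fun i : Fin n => gen k m n v q i.1) := by
    rw [adjoin_range_gen]
    exact Algebra.mem_top
  induction h_mem using Algebra.adjoin_induction generalizing F with
  | mem x hx =>
    obtain ⟨j, rfl⟩ := hx
    exact toHecke_polyRep_gen hq haw j F
  | algebraMap c =>
    rw [AlgHom.commutes, Module.algebraMap_end_apply, Submodule.coe_smul, map_smul,
      Algebra.smul_def]
  | add x y _ _ hx hy =>
    rw [map_add, LinearMap.add_apply, Submodule.coe_add, map_add, hx, hy, add_mul]
  | mul x y _ _ hx hy => rw [map_mul, Module.End.mul_apply, hx, hy, mul_assoc]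

lemma toHecke_polyRep_permVec_one (hq : q ≠ 0) (haw : IsAW k m n v q aw) (h : CH k m n v q) :
    toHecke aw (polyRep k m n v q h ⟨permVec 1, permVec_mem_truncated 1⟩ :
      PermPolynomial (Fin n) k) = h := by
  rw [toHecke_polyRep hq haw, toHecke_permVec, aw_one haw, mul_one]

lemma span_murphy_aw_eq_top (hq : q ≠ 0) (haw : IsAW k m n v q aw) :
    Submodule.span k (Set.range (fun p : (Fin n → Fin m) × Equiv.Perm (Fin n) =>
      (List.ofFn fun i : Fin n => murphy k m n v q i ^ (p.1 i).1).prod * aw p.2)) = ⊤ := by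
  rw [← funext (toHecke_truncatedMonomial (aw := aw)), eq_top_iff]
  intro h _
  rw [← toHecke_polyRep_permVec_one hq haw h]
  change _ ∈ Submodule.span k (Set.range (toHecke aw ∘ truncatedMonomial k))
  rw [Set.range_comp, ← Submodule.map_span]
  exact Submodule.mem_map_of_mem (truncated_le_span_truncatedMonomial (Subtype.mem _))

end Intertwiner

/-- The `m^n · n!` elements `L_1^{e_1} ⋯ L_n^{e_n} a_w`, where
`0 ≤ e_i < m` and `w` ranges over the symmetric group `S_n`, form a `k`-basis of the
cyclotomic Hecke algebra `H_n(v_1,…,v_m;q)`. -/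
theorem murphy_perm_basis [NeZero m] [NeZero n] (hq : q ≠ 0)
    (aw : Equiv.Perm (Fin n) → CH k m n v q) (haw : IsAW k m n v q aw) :
    LinearIndependent k (fun p : (Fin n → Fin m) × Equiv.Perm (Fin n) =>
        (List.ofFn fun i : Fin n => murphy k m n v q i ^ (p.1 i).1).prod * aw p.2) ∧
      Submodule.span k (Set.range (fun p : (Fin n → Fin m) × Equiv.Perm (Fin n) =>
        (List.ofFn fun i : Fin n => murphy k m n v q i ^ (p.1 i).1).prod * aw p.2)) = ⊤ := by
  exact ⟨linearIndependent_murphy_aw hq haw, span_murphy_aw_eq_top hq haw⟩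

end Cyclo
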